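/- (Morawetz estimate) Let λ = 1, a > -1/4, 0 < b < 1, and let u be a smooth Schwartz solution of (INLS) with sup_{t∈ℝ} ‖u(t)‖_{H¹(ℝ³)} ≤ E for some E > 0. Then there exist constants C > 0 and R₀ > 1, depending only on a, b and E, such that for every T > 0 and every R ≥ R₀, (1/T) ∫_0^T ∫_{|x| ≤ R/4} |u(t,x)|⁴/|x|^b dx dt ≤ C ( R/T + R^{−b} ). -/

import Mathlib

open MeasureTheory Real Filter
open scoped BigOperators Topology

noncomputable section

/-- Three-dimensional Euclidean space. -/
abbrev E3 : Type := EuclideanSpace ℝ (Fin 3)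

/-- The `j`-th standard basis vector of `E3`. -/
def e3 (j : Fin 3) : E3 := EuclideanSpace.single j 1

/-- The `j`-th spatial partial derivative of a complex-valued function. -/
def pd (j : Fin 3) (f : E3 → ℂ) (x : E3) : ℂ := fderiv ℝ f x (e3 j)

/-- The `j`-th spatial partial derivative of a real-valued function. -/
def pdR (j : Fin 3) (w : E3 → ℝ) (x : E3) : ℝ := fderiv ℝ w x (e3 j)

/-- The Laplacian of a complex-valued function on `E3`. -/
def lap (f : E3 → ℂ) (x : E3) : ℂ := ∑ j : Fin 3, pd j (fun y => pd j f y) x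

/-- The Laplacian of a real-valued function on `E3`. -/
def lapR (w : E3 → ℝ) (x : E3) : ℝ := ∑ j : Fin 3, pdR j (fun y => pdR j w y) x

/-- Second partial derivatives `∂_j ∂_k w` of a real-valued function on `E3`. -/
def pdR2 (j k : Fin 3) (w : E3 → ℝ) (x : E3) : ℝ := pdR j (fun y => pdR k w y) x

/-- A smooth Schwartz solution of the inhomogeneous cubic NLS with inverse-square
potential: `i ∂ₜ u + Δu − (a/|x|²) u = λ |x|^{−b} |u|² u` on `ℝ × (ℝ³ \ {0})`,
with `u(t,·)` Schwartz for each time, and Schwartz seminorms of `u(t,·)`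
and `∂ₜ u(t,·)` locally uniformly bounded in `t`. -/
structure IsSchwartzSolution (a b lam : ℝ) (u : ℝ → E3 → ℂ) : Prop where
  smooth : ContDiff ℝ (⊤ : ℕ∞) (Function.uncurry u)
  schwartz : ∀ t : ℝ, ∃ f : SchwartzMap E3 ℂ, ∀ x : E3, f x = u t x
  schwartz_dt : ∀ t : ℝ, ∃ f : SchwartzMap E3 ℂ, ∀ x : E3,
      f x = deriv (fun s => u s x) t
  unif_bound : ∀ (k n : ℕ) (T : ℝ), 0 < T → ∃ C : ℝ, ∀ t ∈ Set.Icc (-T) T, ∀ x : E3,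
      ‖x‖ ^ k * ‖iteratedFDeriv ℝ n (u t) x‖
        + ‖x‖ ^ k * ‖iteratedFDeriv ℝ n (fun y => deriv (fun s => u s y) t) x‖ ≤ C
  eqn : ∀ (t : ℝ) (x : E3), x ≠ 0 →
      Complex.I * deriv (fun s => u s x) t + lap (u t) x
          - ((a / ‖x‖ ^ 2 : ℝ) : ℂ) * u t x
        = (lam : ℂ) * ((‖x‖ ^ (-b) : ℝ) : ℂ) * ((‖u t x‖ ^ 2 : ℝ) : ℂ) * u t x

/-!
Let `w = √(R² + |x|²)`. The momentum `2 ∫ ∇w · Im (ū ∇u)` is bounded by the `H¹` norm, while its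
time derivative is the Hessian form `4 ∫ ∇²w(∇u, ∇u)` plus the contributions of the two potentials
and of `-Δ²w ≥ 0`. As `w` is convex with `∇²w ≥ R² / w³`, the sharp Hardy inequality with weight
`R² / w³` absorbs the inverse-square potential down to `a = -1/4`, at the price of an error
`R⁻³ ‖u‖²`. The repulsive nonlinearity contributes at least `R⁻¹ ∫ |u|⁴ / |x|^b` over the ball of
radius `R`. Integrating in time and dividing by `T / R` gives the estimate.

There are no boundary terms at the origin, because the equation forces `u(t, 0) = 0`, and even
`u(t, x) = O(|x|²)` when `a ≠ 0`: all its other terms stay bounded there.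
-/

open scoped ENNReal SchwartzMap LineDeriv RealInnerProductSpace

section LineDerivatives

variable {E : Type*} [NormedAddCommGroup E] [NormedSpace ℝ E] [MeasurableSpace E]
  {F G H : Type*} [NormedAddCommGroup F] [NormedSpace ℝ F] [NormedAddCommGroup G]
  [NormedSpace ℝ G] [NormedAddCommGroup H] [NormedSpace ℝ H]
  {v : E} {p q r : ℝ≥0∞} {μ : Measure E}

/-- `f'` is the classical derivative of `f` in the direction `v` at every point, and both functions
are in `L^p`. Products obey Leibniz' rule along Hölder triples of exponents, and derivatives at the
exponent `1` have integral zero. -/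
structure HasLineDerivInLp (v : E) (p : ℝ≥0∞) (μ : Measure E) (f f' : E → F) : Prop where
  memLp : MemLp f p μ
  memLp_deriv : MemLp f' p μ
  hasLineDerivAt : ∀ x, HasLineDerivAt ℝ f (f' x) x v

namespace HasLineDerivInLp

theorem congr_deriv {f f' g' : E → F} (hf : HasLineDerivInLp v p μ f f') (h : ∀ x, f' x = g' x) :
    HasLineDerivInLp v p μ f g' :=
  funext h ▸ hf

theorem const (c : F) : HasLineDerivInLp v ∞ μ (fun _ => c) (fun _ => 0) where
  memLp := memLp_top_const c
  memLp_deriv := memLp_top_const 0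
  hasLineDerivAt _ := hasDerivAt_const (0 : ℝ) c

theorem add {f f' g g' : E → F} (hf : HasLineDerivInLp v p μ f f')
    (hg : HasLineDerivInLp v p μ g g') :
    HasLineDerivInLp v p μ (fun x => f x + g x) (fun x => f' x + g' x) where
  memLp := hf.memLp.add hg.memLp
  memLp_deriv := hf.memLp_deriv.add hg.memLp_deriv
  hasLineDerivAt x := HasDerivAt.add (hf.hasLineDerivAt x) (hg.hasLineDerivAt x)

theorem clm_apply (L : F →L[ℝ] G) {f f' : E → F} (hf : HasLineDerivInLp v p μ f f') :
    HasLineDerivInLp v p μ (fun x => L (f x)) (fun x => L (f' x)) where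
  memLp := L.comp_memLp' hf.memLp
  memLp_deriv := L.comp_memLp' hf.memLp_deriv
  hasLineDerivAt x := L.hasFDerivAt.comp_hasDerivAt (0 : ℝ) (hf.hasLineDerivAt x)

theorem bilin [p.HolderTriple q r] (B : F →L[ℝ] G →L[ℝ] H) {f f' : E → F} {g g' : E → G}
    (hf : HasLineDerivInLp v p μ f f') (hg : HasLineDerivInLp v q μ g g') :
    HasLineDerivInLp v r μ (fun x => B (f x) (g x)) (fun x => B (f x) (g' x) + B (f' x) (g x)) where
  memLp := B.memLp_of_bilin r hf.memLp hg.memLp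
  memLp_deriv := (B.memLp_of_bilin r hf.memLp hg.memLp_deriv).add
    (B.memLp_of_bilin r hf.memLp_deriv hg.memLp)
  hasLineDerivAt x := by
    simpa [HasLineDerivAt] using
      B.hasDerivAt_of_bilinear (fun _ => hf.hasLineDerivAt x) (fun _ => hg.hasLineDerivAt x)

theorem mul [p.HolderTriple q r] {f f' g g' : E → ℝ}
    (hf : HasLineDerivInLp v p μ f f') (hg : HasLineDerivInLp v q μ g g') :
    HasLineDerivInLp v r μ (fun x => f x * g x) (fun x => f x * g' x + f' x * g x) :=
  bilin (ContinuousLinearMap.mul ℝ ℝ) hf hg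

theorem const_mul (c : ℝ) {f f' : E → ℝ} (hf : HasLineDerivInLp v p μ f f') :
    HasLineDerivInLp v p μ (fun x => c * f x) (fun x => c * f' x) :=
  hf.clm_apply (ContinuousLinearMap.mul ℝ ℝ c)

protected theorem inner {F : Type*} [NormedAddCommGroup F] [InnerProductSpace ℝ F]
    [p.HolderTriple q r] {f f' g g' : E → F} (hf : HasLineDerivInLp v p μ f f')
    (hg : HasLineDerivInLp v q μ g g') :
    HasLineDerivInLp v r μ (fun x => ⟪f x, g x⟫) (fun x => ⟪f x, g' x⟫ + ⟪f' x, g x⟫) :=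
  bilin (innerSL ℝ) hf hg

theorem pow {f f' : E → ℝ} (hf : HasLineDerivInLp v ∞ μ f f') (n : ℕ) :
    HasLineDerivInLp v ∞ μ (fun x => f x ^ n) (fun x => n * f x ^ (n - 1) * f' x) := by
  induction n with
  | zero => simpa using const (1 : ℝ)
  | succ n ih =>
    simp only [pow_succ]
    refine (ih.mul hf).congr_deriv fun x => ?_
    rcases n with _ | n
    · simp
    · simp only [Nat.add_sub_cancel]
      push_cast
      ring

theorem integral_eq_zero [BorelSpace E] [FiniteDimensional ℝ E] [μ.IsAddHaarMeasure]
    {f f' : E → ℝ} (hf : HasLineDerivInLp v 1 μ f f') : ∫ x, f' x ∂μ = 0 := by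
  have key := integral_bilinear_hasLineDerivAt_right_eq_neg_left_of_integrable (μ := μ) (v := v)
    (f := fun _ => (1 : ℝ)) (f' := fun _ => 0) (g := f) (g' := f')
    (B := ContinuousLinearMap.mul ℝ ℝ) (by simp)
    (by simpa using memLp_one_iff_integrable.1 hf.memLp_deriv)
    (by simpa using memLp_one_iff_integrable.1 hf.memLp)
    (fun x _ => hasDerivAt_const (0 : ℝ) (1 : ℝ)) (fun x _ => hf.hasLineDerivAt x)
  simpa using key

end HasLineDerivInLp

end LineDerivatives

section IntegratesToZero

variable {α : Type*} [MeasurableSpace α] {μ : Measure α} {f g : α → ℝ}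

/-- `f` is integrable with integral zero, so that it may be added to an integrand at will.
Integrations by parts are recorded in this form, which keeps integrability and value together. -/
structure IntegratesToZero (μ : Measure α) (f : α → ℝ) : Prop where
  integrable : Integrable f μ
  integral_eq_zero : ∫ x, f x ∂μ = 0

namespace IntegratesToZero

theorem congr_ae (hf : IntegratesToZero μ f) (h : f =ᵐ[μ] g) : IntegratesToZero μ g :=
  ⟨hf.integrable.congr h, by rw [← integral_congr_ae h, hf.integral_eq_zero]⟩

theorem congr (hf : IntegratesToZero μ f) (h : ∀ x, f x = g x) : IntegratesToZero μ g :=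
  funext h ▸ hf

theorem zero : IntegratesToZero μ fun _ => 0 :=
  ⟨integrable_zero α ℝ μ, integral_zero α ℝ⟩

theorem add (hf : IntegratesToZero μ f) (hg : IntegratesToZero μ g) :
    IntegratesToZero μ fun x => f x + g x :=
  ⟨hf.integrable.add hg.integrable, by
    rw [integral_add hf.integrable hg.integrable, hf.integral_eq_zero, hg.integral_eq_zero,
      add_zero]⟩

theorem const_mul (c : ℝ) (hf : IntegratesToZero μ f) : IntegratesToZero μ fun x => c * f x :=
  ⟨hf.integrable.const_mul c, by rw [integral_const_mul, hf.integral_eq_zero, mul_zero]⟩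

theorem sum {ι : Type*} {s : Finset ι} {f : ι → α → ℝ} (hf : ∀ i ∈ s, IntegratesToZero μ (f i)) :
    IntegratesToZero μ fun x => ∑ i ∈ s, f i x :=
  ⟨integrable_finsetSum s fun i hi => (hf i hi).integrable, by
    rw [integral_finsetSum s fun i hi => (hf i hi).integrable]
    exact Finset.sum_eq_zero fun i hi => (hf i hi).integral_eq_zero⟩

theorem setIntegral_le {F G Z : α → ℝ} {s : Set α} (hZ : IntegratesToZero μ Z)
    (hs : MeasurableSet s) (hF : ∀ x, 0 ≤ F x) (hG : Integrable G μ)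
    (h : ∀ᵐ x ∂μ, s.indicator F x ≤ G x + Z x) : ∫ x in s, F x ∂μ ≤ ∫ x, G x ∂μ :=
  calc ∫ x in s, F x ∂μ = ∫ x, s.indicator F x ∂μ := (integral_indicator hs).symm
    _ ≤ ∫ x, G x + Z x ∂μ :=
        integral_mono_of_nonneg (.of_forall fun x => Set.indicator_nonneg (fun y _ => hF y) x)
          (hG.add hZ.integrable) h
    _ = ∫ x, G x ∂μ := by rw [integral_add hG hZ.integrable, hZ.integral_eq_zero, add_zero]

end IntegratesToZero

theorem HasLineDerivInLp.integratesToZero {E : Type*} [NormedAddCommGroup E] [NormedSpace ℝ E]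
    [MeasurableSpace E] [BorelSpace E] [FiniteDimensional ℝ E] {μ : Measure E}
    [μ.IsAddHaarMeasure] {v : E} {f f' : E → ℝ} (hf : HasLineDerivInLp v 1 μ f f') :
    IntegratesToZero μ f' :=
  ⟨memLp_one_iff_integrable.1 hf.memLp_deriv, hf.integral_eq_zero⟩

end IntegratesToZero

section Multipliers

variable {E F ι : Type*} [NormedAddCommGroup E] [NormedSpace ℝ E] [MeasurableSpace E]
  [BorelSpace E] [FiniteDimensional ℝ E] {μ : Measure E} [μ.IsAddHaarMeasure]
  [NormedAddCommGroup F] [InnerProductSpace ℝ F] [Fintype ι] {v : ι → E} {u : E → F}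
  {u₁ : ι → E → F} {u₂ : ι → ι → E → F}

theorem integratesToZero_vectorField_multiplier {W : ι → E → ℝ} {W₁ : ι → ι → E → ℝ}
    (hW : ∀ j k, HasLineDerivInLp (v k) ∞ μ (W j) (W₁ j k))
    (hu₁ : ∀ j k, HasLineDerivInLp (v k) 2 μ (u₁ j) (u₂ j k))
    (hsymm : ∀ j k x, u₂ j k x = u₂ k j x) :
    IntegratesToZero μ fun x => ∑ j, ∑ k,
      (2 * W j x * ⟪u₁ j x, u₂ k k x⟫ + 2 * W₁ j k x * ⟪u₁ j x, u₁ k x⟫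
        - W₁ j j x * ‖u₁ k x‖ ^ 2) := by
  refine .sum fun j _ => .sum fun k _ => ?_
  have stress := ((hW j k).mul ((hu₁ j k).inner (r := 1) (hu₁ k k)) (r := 1)).integratesToZero
  have energy := ((hW j j).mul ((hu₁ k j).inner (r := 1) (hu₁ k j)) (r := 1)).integratesToZero
  refine ((stress.const_mul 2).add (energy.const_mul (-1))).congr fun x => ?_
  rw [hsymm k j x, real_inner_comm (u₁ k x) (u₂ j k x), real_inner_self_eq_norm_sq]
  ring

theorem integratesToZero_scalar_multiplier {d : E → ℝ} {d₁ : ι → E → ℝ} {d₂ : ι → E → ℝ}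
    (hd : ∀ k, HasLineDerivInLp (v k) ∞ μ d (d₁ k))
    (hd₁ : ∀ k, HasLineDerivInLp (v k) ∞ μ (d₁ k) (d₂ k))
    (hu : ∀ k, HasLineDerivInLp (v k) 2 μ u (u₁ k))
    (hu₁ : ∀ j k, HasLineDerivInLp (v k) 2 μ (u₁ j) (u₂ j k)) :
    IntegratesToZero μ fun x => ∑ k,
      (2 * d x * ⟪u x, u₂ k k x⟫ + 2 * d x * ‖u₁ k x‖ ^ 2 - d₂ k x * ‖u x‖ ^ 2) := by
  refine .sum fun k _ => ?_
  have flux := ((hd k).mul ((hu k).inner (r := 1) (hu₁ k k)) (r := 1)).integratesToZero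
  have mass := ((hd₁ k).mul ((hu k).inner (r := 1) (hu k)) (r := 1)).integratesToZero
  refine ((flux.const_mul 2).add (mass.const_mul (-1))).congr fun x => ?_
  rw [real_inner_comm (u x) (u₁ k x), real_inner_self_eq_norm_sq, real_inner_self_eq_norm_sq]
  ring

end Multipliers

section HomogeneousWeights

variable {E : Type*} [NormedAddCommGroup E] [MeasurableSpace E] [OpensMeasurableSpace E]
  {μ : Measure E} [IsFiniteMeasureOnCompacts μ] [ProperSpace E]

theorem integrable_of_norm_le_on_closedBall_of_norm_le_off {f g : E → ℝ} {r C : ℝ}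
    (hf : AEStronglyMeasurable f μ) (hg : Integrable g μ) (hball : ∀ x, ‖x‖ ≤ r → ‖f x‖ ≤ C)
    (hoff : ∀ x, r < ‖x‖ → ‖f x‖ ≤ ‖g x‖) : Integrable f μ := by
  have hC : Integrable ((Metric.closedBall (0 : E) r).indicator fun _ => C) μ :=
    (integrableOn_const (isCompact_closedBall (0 : E) r).measure_lt_top.ne).integrable_indicator
      Metric.isClosed_closedBall.measurableSet
  refine (hC.norm.add hg.norm).mono' hf (.of_forall fun x => ?_)
  rcases le_or_gt ‖x‖ r with hx | hx
  · have hmem : x ∈ Metric.closedBall (0 : E) r := by simpa using hx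
    simp only [Pi.add_apply, Set.indicator_of_mem hmem]
    linarith [hball x hx, Real.le_norm_self C, norm_nonneg (g x)]
  · simp only [Pi.add_apply]
    linarith [hoff x hx, norm_nonneg ((Metric.closedBall (0 : E) r).indicator (fun _ => C) x)]

theorem mul_pow_mul_rpow_neg_le {r c C : ℝ} {m : ℕ} (hr : 0 ≤ r) (hr₁ : r ≤ 1) (hm : 0 < m)
    (hC : 0 ≤ C) (hcm : c ≤ m) : C * r ^ m * r ^ (-c) ≤ C := by
  rcases hr.eq_or_lt with rfl | hr
  · simpa [hm.ne'] using hC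
  · rw [mul_assoc, ← rpow_natCast, ← rpow_add hr]
    exact mul_le_of_le_one_right hC (rpow_le_one hr.le hr₁ (by linarith))

theorem integrable_of_norm_le_mul_rpow_norm {f g : E → ℝ} {C c : ℝ} {m : ℕ}
    (hf : AEStronglyMeasurable f μ) (hg : Integrable g μ) (hm : 0 < m)
    (hC : ∀ x, ‖g x‖ ≤ C * ‖x‖ ^ m) (hc : 0 ≤ c) (hcm : c ≤ m)
    (hfg : ∀ x, ‖f x‖ ≤ ‖g x‖ * ‖x‖ ^ (-c)) : Integrable f μ := by
  refine integrable_of_norm_le_on_closedBall_of_norm_le_off (r := 1) (C := |C|) hf hg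
    (fun x hx => ?_) fun x hx => ?_
  · calc ‖f x‖ ≤ ‖g x‖ * ‖x‖ ^ (-c) := hfg x
      _ ≤ |C| * ‖x‖ ^ m * ‖x‖ ^ (-c) := by
        gcongr
        exact (hC x).trans (by gcongr; exact le_abs_self C)
      _ ≤ |C| := mul_pow_mul_rpow_neg_le (norm_nonneg x) hx hm (abs_nonneg C) hcm
  · exact (hfg x).trans (mul_le_of_le_one_right (norm_nonneg _)
      (rpow_le_one_of_one_le_of_nonpos hx.le (neg_nonpos.2 hc)))

end HomogeneousWeights

section PowerPotentials

variable {E : Type*} [NormedAddCommGroup E] [InnerProductSpace ℝ E] {v : E} {G G₁ : E → ℝ}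
  {c C C₁ : ℝ}

theorem norm_inner_div_norm_sq_mul_rpow_le (x : E) (g : ℝ) :
    ‖⟪x, v⟫ / ‖x‖ ^ 2 * (g * ‖x‖ ^ (-c))‖ ≤ ‖‖v‖ * g‖ * ‖x‖ ^ (-(c + 1)) := by
  rcases eq_or_ne x 0 with rfl | hx
  · simpa using mul_nonneg (by positivity) (zero_rpow_nonneg (-(c + 1)))
  · have hpos : 0 < ‖x‖ := norm_pos_iff.2 hx
    have hsplit : ‖x‖ ^ (-(c + 1)) = ‖x‖ ^ (-c) * ‖x‖⁻¹ := by
      rw [neg_add, rpow_add hpos, rpow_neg_one]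
    rw [hsplit]
    simp only [norm_mul, norm_div, norm_pow, norm_norm, norm_rpow_of_nonneg hpos.le]
    calc ‖⟪x, v⟫‖ / ‖x‖ ^ 2 * (‖g‖ * ‖x‖ ^ (-c))
        ≤ ‖x‖ * ‖v‖ / ‖x‖ ^ 2 * (‖g‖ * ‖x‖ ^ (-c)) := by
          gcongr
          exact norm_inner_le_norm x v
      _ = ‖v‖ * ‖g‖ * (‖x‖ ^ (-c) * ‖x‖⁻¹) := by field_simp

theorem hasLineDerivAt_mul_rpow_norm_of_ne {x : E} {g₁ : ℝ} (hG : HasLineDerivAt ℝ G g₁ x v)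
    (hx : x ≠ 0) :
    HasLineDerivAt ℝ (fun y => G y * ‖y‖ ^ (-c))
      (g₁ * ‖x‖ ^ (-c) - c * (⟪x, v⟫ / ‖x‖ ^ 2 * (G x * ‖x‖ ^ (-c)))) x v := by
  have hline : HasDerivAt (fun t : ℝ => x + t • v) v 0 := by
    simpa using ((hasDerivAt_id (0 : ℝ)).smul_const v).const_add x
  have hnorm : HasDerivAt (fun t : ℝ => ‖x + t • v‖ ^ (-c))
      (-c * (⟪x, v⟫ / ‖x‖ ^ 2 * ‖x‖ ^ (-c))) 0 := by
    have hpow (y : E) : ‖y‖ ^ (-c) = (‖y‖ ^ 2) ^ (-c / 2) := by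
      rw [← rpow_natCast, ← rpow_mul (norm_nonneg y)]
      congr 1
      push_cast
      ring
    simp only [hpow]
    have hne : ‖x + (0 : ℝ) • v‖ ^ 2 ≠ 0 := by simpa using hx
    convert hline.norm_sq.rpow_const (p := -c / 2) (.inl hne) using 1
    simp only [zero_smul, add_zero]
    rw [rpow_sub_one (by positivity)]
    ring
  refine (HasDerivAt.mul hG hnorm).congr_deriv ?_
  simp only [zero_smul, add_zero]
  ring

theorem hasLineDerivAt_mul_rpow_norm_zero (hG : ∀ x, ‖G x‖ ≤ C * ‖x‖ ^ 4) (hc : c ≤ 2) :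
    HasLineDerivAt ℝ (fun x => G x * ‖x‖ ^ (-c)) 0 0 v := by
  suffices h : (fun x => G x * ‖x‖ ^ (-c)) =O[𝓝 (0 : E)] fun x => ‖x - 0‖ ^ 2 by
    simpa using (h.hasFDerivAt one_lt_two).hasLineDerivAt v
  refine .of_bound |C| ?_
  filter_upwards [Metric.closedBall_mem_nhds (0 : E) one_pos] with x hx
  have hx₁ : ‖x‖ ≤ 1 := by simpa using hx
  rw [norm_mul, norm_rpow_of_nonneg (norm_nonneg x), norm_norm, sub_zero, norm_pow, norm_norm]
  calc ‖G x‖ * ‖x‖ ^ (-c) ≤ |C| * ‖x‖ ^ 4 * ‖x‖ ^ (-c) := by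
        gcongr
        exact (hG x).trans (by gcongr; exact le_abs_self C)
    _ = |C| * ‖x‖ ^ 2 * ‖x‖ ^ (-c) * ‖x‖ ^ 2 := by ring
    _ ≤ |C| * ‖x‖ ^ 2 := by
        gcongr
        exact mul_pow_mul_rpow_neg_le (norm_nonneg x) hx₁ two_pos (abs_nonneg C) (mod_cast hc)

variable [MeasurableSpace E] [BorelSpace E] [FiniteDimensional ℝ E] {μ : Measure E}
  [IsFiniteMeasureOnCompacts μ]

theorem HasLineDerivInLp.mul_rpow_norm (hG : HasLineDerivInLp v 1 μ G G₁) (hc₀ : 0 ≤ c)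
    (hc₂ : c ≤ 2) (hC : ∀ x, ‖G x‖ ≤ C * ‖x‖ ^ 4) (hC₁ : ∀ x, ‖G₁ x‖ ≤ C₁ * ‖x‖ ^ 2) :
    HasLineDerivInLp v 1 μ (fun x => G x * ‖x‖ ^ (-c))
      (fun x => G₁ x * ‖x‖ ^ (-c) - c * (⟪x, v⟫ / ‖x‖ ^ 2 * (G x * ‖x‖ ^ (-c)))) := by
  have hG_int := memLp_one_iff_integrable.1 hG.memLp
  have hG₁_int := memLp_one_iff_integrable.1 hG.memLp_deriv
  have hweight : AEStronglyMeasurable (fun x : E => ‖x‖ ^ (-c)) μ :=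
    (by fun_prop : Measurable fun x : E => ‖x‖ ^ (-c)).aestronglyMeasurable
  have hprod : Integrable (fun x => G x * ‖x‖ ^ (-c)) μ :=
    integrable_of_norm_le_mul_rpow_norm (hG_int.1.mul hweight) hG_int four_pos hC hc₀
      (by norm_num; linarith) fun x => by simp [abs_rpow_of_nonneg]
  have hderiv : Integrable (fun x => G₁ x * ‖x‖ ^ (-c)) μ :=
    integrable_of_norm_le_mul_rpow_norm (hG₁_int.1.mul hweight) hG₁_int two_pos hC₁ hc₀
      (by norm_num; linarith) fun x => by simp [abs_rpow_of_nonneg]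
  have hradial : Integrable (fun x => ⟪x, v⟫ / ‖x‖ ^ 2 * (G x * ‖x‖ ^ (-c))) μ := by
    have hmeas : AEStronglyMeasurable (fun x : E => ⟪x, v⟫ / ‖x‖ ^ 2) μ :=
      (by fun_prop : Measurable fun x : E => ⟪x, v⟫ / ‖x‖ ^ 2).aestronglyMeasurable
    refine integrable_of_norm_le_mul_rpow_norm (C := ‖v‖ * C) (hmeas.mul hprod.1)
      (hG_int.const_mul ‖v‖) four_pos (fun x => ?_) (by linarith) (by norm_num; linarith)
      fun x => norm_inner_div_norm_sq_mul_rpow_le x (G x)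
    rw [norm_mul, norm_norm, mul_assoc]
    exact mul_le_mul_of_nonneg_left (hC x) (norm_nonneg v)
  refine ⟨memLp_one_iff_integrable.2 hprod,
    memLp_one_iff_integrable.2 (hderiv.sub (hradial.const_mul c)), fun x => ?_⟩
  rcases eq_or_ne x 0 with rfl | hx
  · have hG₁_zero : G₁ 0 = 0 := by simpa using hC₁ 0
    simpa [hG₁_zero] using hasLineDerivAt_mul_rpow_norm_zero hC hc₂
  · exact hasLineDerivAt_mul_rpow_norm_of_ne (hG.hasLineDerivAt x) hx

end PowerPotentials

section MorawetzWeight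

/-- The inverse bracket `1 / √(R² + |x|²)`. -/
def bracketInv (R : ℝ) (x : E3) : ℝ := (√(R ^ 2 + ‖x‖ ^ 2))⁻¹

/-- The Morawetz vector field `∇√(R² + |x|²)`, a smooth version at scale `R` of `x / |x|`. -/
def morawetzField (R : ℝ) (j : Fin 3) (x : E3) : ℝ := x j * bracketInv R x

/-- The Hessian of `√(R² + |x|²)`, i.e. the Jacobian matrix of `morawetzField`. -/
def morawetzHess (R : ℝ) (j k : Fin 3) (x : E3) : ℝ :=
  (if j = k then bracketInv R x else 0)
    - bracketInv R x * (morawetzField R j x * morawetzField R k x)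

/-- The Laplacian of `√(R² + |x|²)`, i.e. the divergence of `morawetzField`. -/
def morawetzDiv (R : ℝ) (x : E3) : ℝ := 2 * bracketInv R x + R ^ 2 * bracketInv R x ^ 3

/-- The gradient of `morawetzDiv`. -/
def morawetzDivGrad (R : ℝ) (k : Fin 3) (x : E3) : ℝ :=
  -((2 * bracketInv R x ^ 2 + 3 * R ^ 2 * bracketInv R x ^ 4) * morawetzField R k x)

variable {R : ℝ} {x : E3}

theorem bracketInv_pos (hR : 0 < R) : 0 < bracketInv R x :=
  inv_pos.2 (sqrt_pos.2 (by positivity))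

theorem bracketInv_sq_mul (hR : 0 < R) : bracketInv R x ^ 2 * (R ^ 2 + ‖x‖ ^ 2) = 1 := by
  have hpos : 0 < R ^ 2 + ‖x‖ ^ 2 := by positivity
  rw [bracketInv, inv_pow, sq_sqrt hpos.le, inv_mul_cancel₀ hpos.ne']

theorem bracketInv_le (hR : 0 < R) : bracketInv R x ≤ R⁻¹ :=
  inv_anti₀ hR (le_sqrt_of_sq_le (le_add_of_nonneg_right (sq_nonneg ‖x‖)))

theorem inv_le_two_mul_bracketInv (hR : 0 < R) (hx : ‖x‖ ≤ R) : R⁻¹ ≤ 2 * bracketInv R x := by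
  have hsqrt : √(R ^ 2 + ‖x‖ ^ 2) ≤ 2 * R :=
    sqrt_le_iff.2 ⟨by positivity, by nlinarith [norm_nonneg x]⟩
  have hpos : 0 < √(R ^ 2 + ‖x‖ ^ 2) := sqrt_pos.2 (by positivity)
  rw [bracketInv, ← div_eq_mul_inv, inv_eq_one_div, div_le_div_iff₀ hR hpos]
  linarith

theorem norm_morawetzField_le_one (hR : 0 < R) (j : Fin 3) : ‖morawetzField R j x‖ ≤ 1 := by
  have hpos : 0 < √(R ^ 2 + ‖x‖ ^ 2) := sqrt_pos.2 (by positivity)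
  rw [morawetzField, bracketInv, ← div_eq_mul_inv, norm_div, norm_of_nonneg hpos.le,
    div_le_one hpos]
  exact (PiLp.norm_apply_le x j).trans (le_sqrt_of_sq_le (le_add_of_nonneg_left (sq_nonneg R)))

theorem sum_morawetzField_sq (hR : 0 < R) :
    ∑ k, morawetzField R k x ^ 2 = 1 - R ^ 2 * bracketInv R x ^ 2 := by
  have hsum : ∑ k, morawetzField R k x ^ 2 = bracketInv R x ^ 2 * ‖x‖ ^ 2 := by
    rw [EuclideanSpace.real_norm_sq_eq, Finset.mul_sum]
    exact Finset.sum_congr rfl fun k _ => by rw [morawetzField]; ring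
  linarith [bracketInv_sq_mul hR (x := x)]

theorem sum_morawetzHess_diag (hR : 0 < R) : ∑ k, morawetzHess R k k x = morawetzDiv R x := by
  have hsq := sum_morawetzField_sq hR (x := x)
  simp only [Fin.sum_univ_three, morawetzHess, if_true, morawetzDiv] at hsq ⊢
  linear_combination -bracketInv R x * hsq

theorem inner_e3 (x : E3) (k : Fin 3) : ⟪x, e3 k⟫ = x k := by
  simp [e3, EuclideanSpace.inner_single_right]

theorem hasLineDerivAt_coord (j k : Fin 3) (x : E3) :
    HasLineDerivAt ℝ (fun y : E3 => y j) (if j = k then 1 else 0) x (e3 k) := by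
  simpa [e3, PiLp.single_apply] using
    ((EuclideanSpace.proj (𝕜 := ℝ) j).hasFDerivAt (x := x)).hasLineDerivAt (e3 k)

theorem hasLineDerivAt_bracketInv (hR : 0 < R) (k : Fin 3) (x : E3) :
    HasLineDerivAt ℝ (bracketInv R) (-(bracketInv R x ^ 2 * morawetzField R k x)) x (e3 k) := by
  have hline : HasDerivAt (fun t : ℝ => x + t • e3 k) (e3 k) 0 := by
    simpa using ((hasDerivAt_id (0 : ℝ)).smul_const (e3 k)).const_add x
  have hpos (y : E3) : 0 < R ^ 2 + ‖y‖ ^ 2 := by positivity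
  have hinv := ((hline.norm_sq.const_add (R ^ 2)).sqrt (hpos _).ne').inv (sqrt_pos.2 (hpos _)).ne'
  refine hinv.congr_deriv ?_
  simp only [zero_smul, add_zero, inner_e3, morawetzField, bracketInv]
  field_simp

theorem hasLineDerivAt_morawetzField (hR : 0 < R) (j k : Fin 3) (x : E3) :
    HasLineDerivAt ℝ (morawetzField R j) (morawetzHess R j k x) x (e3 k) := by
  refine (HasDerivAt.mul (hasLineDerivAt_coord j k x)
    (hasLineDerivAt_bracketInv hR k x)).congr_deriv ?_
  simp only [zero_smul, add_zero, morawetzHess, morawetzField, ite_mul, one_mul, zero_mul]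
  ring

theorem memLp_top_bracketInv (hR : 0 < R) : MemLp (bracketInv R) ∞ volume := by
  have hmeas : Measurable (bracketInv R) := by unfold bracketInv; fun_prop
  refine memLp_top_of_bound hmeas.aestronglyMeasurable R⁻¹ (.of_forall fun x => ?_)
  rw [norm_of_nonneg (bracketInv_pos hR).le]
  exact bracketInv_le hR

theorem memLp_top_morawetzField (hR : 0 < R) (j : Fin 3) : MemLp (morawetzField R j) ∞ volume := by
  have hmeas : Measurable (morawetzField R j) := by unfold morawetzField bracketInv; fun_prop
  exact memLp_top_of_bound hmeas.aestronglyMeasurable 1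
    (.of_forall fun x => norm_morawetzField_le_one hR j)

theorem memLp_top_morawetzHess (hR : 0 < R) (j k : Fin 3) :
    MemLp (morawetzHess R j k) ∞ volume := by
  have hs := memLp_top_bracketInv hR
  have hprod : MemLp (fun x => morawetzField R j x * morawetzField R k x) ∞ volume :=
    (memLp_top_morawetzField hR k).mul' (memLp_top_morawetzField hR j)
  refine MemLp.sub (f := fun x => if j = k then bracketInv R x else 0) ?_ (hprod.mul' hs)
  split_ifs
  · exact hs
  · exact memLp_top_const 0

theorem hasLineDerivInLp_morawetzField (hR : 0 < R) (j k : Fin 3) :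
    HasLineDerivInLp (e3 k) ∞ volume (morawetzField R j) (morawetzHess R j k) :=
  ⟨memLp_top_morawetzField hR j, memLp_top_morawetzHess hR j k,
    hasLineDerivAt_morawetzField hR j k⟩

theorem hasLineDerivInLp_bracketInv (hR : 0 < R) (k : Fin 3) :
    HasLineDerivInLp (e3 k) ∞ volume (bracketInv R)
      (fun x => -(bracketInv R x ^ 2 * morawetzField R k x)) where
  memLp := memLp_top_bracketInv hR
  memLp_deriv := by
    have hs := memLp_top_bracketInv hR
    have hsq : MemLp (fun x => bracketInv R x * bracketInv R x) ∞ volume := hs.mul' hs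
    simp only [sq]
    exact ((memLp_top_morawetzField hR k).mul' hsq).neg
  hasLineDerivAt := hasLineDerivAt_bracketInv hR k

theorem hasLineDerivInLp_morawetzDiv (hR : 0 < R) (k : Fin 3) :
    HasLineDerivInLp (e3 k) ∞ volume (morawetzDiv R) (morawetzDivGrad R k) := by
  have hs := hasLineDerivInLp_bracketInv hR k
  refine ((hs.const_mul 2).add ((hs.pow 3).const_mul (R ^ 2))).congr_deriv fun x => ?_
  simp only [morawetzDivGrad]
  push_cast
  ring

/-- The pure second derivatives of `morawetzDiv`. -/
def morawetzDivHess (R : ℝ) (k : Fin 3) (x : E3) : ℝ :=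
  (4 * bracketInv R x ^ 3 + 12 * R ^ 2 * bracketInv R x ^ 5) * morawetzField R k x ^ 2
    - (2 * bracketInv R x ^ 2 + 3 * R ^ 2 * bracketInv R x ^ 4) * morawetzHess R k k x

theorem hasLineDerivInLp_morawetzDivGrad (hR : 0 < R) (k : Fin 3) :
    HasLineDerivInLp (e3 k) ∞ volume (morawetzDivGrad R k) (morawetzDivHess R k) := by
  have hs := hasLineDerivInLp_bracketInv hR k
  have hcoeff := ((hs.pow 2).const_mul 2).add ((hs.pow 4).const_mul (3 * R ^ 2))
  have hprod := hcoeff.mul (hasLineDerivInLp_morawetzField hR k k) (r := ∞)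
  convert hprod.const_mul (-1) using 2 with x x
  · simp only [morawetzDivGrad]
    ring
  · simp only [morawetzDivHess]
    push_cast
    ring

theorem sum_morawetzDivHess (hR : 0 < R) :
    ∑ k, morawetzDivHess R k x = -(15 * R ^ 4 * bracketInv R x ^ 7) := by
  have hsq := sum_morawetzField_sq hR (x := x)
  have hdiv := sum_morawetzHess_diag hR (x := x)
  simp only [morawetzDivHess, Finset.sum_sub_distrib, ← Finset.mul_sum, hsq, hdiv, morawetzDiv]
  ring

theorem norm_sum_smul_sq_le {ι F : Type*} [Fintype ι] [SeminormedAddCommGroup F] [NormedSpace ℝ F]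
    (w : ι → ℝ) (z : ι → F) : ‖∑ i, w i • z i‖ ^ 2 ≤ (∑ i, w i ^ 2) * ∑ i, ‖z i‖ ^ 2 :=
  calc ‖∑ i, w i • z i‖ ^ 2 ≤ (∑ i, ‖w i‖ * ‖z i‖) ^ 2 := by
        gcongr
        exact (norm_sum_le _ _).trans_eq (by simp only [norm_smul])
    _ ≤ (∑ i, ‖w i‖ ^ 2) * ∑ i, ‖z i‖ ^ 2 := Finset.sum_mul_sq_le_sq_mul_sq _ _ _
    _ = (∑ i, w i ^ 2) * ∑ i, ‖z i‖ ^ 2 := by simp only [Real.norm_eq_abs, sq_abs]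

theorem sum_morawetzHess_mul_inner {F : Type*} [SeminormedAddCommGroup F] [InnerProductSpace ℝ F]
    (z : Fin 3 → F) : ∑ j, ∑ k, morawetzHess R j k x * ⟪z j, z k⟫
      = bracketInv R x * (∑ k, ‖z k‖ ^ 2 - ‖∑ k, morawetzField R k x • z k‖ ^ 2) := by
  have hexpand : ‖∑ k, morawetzField R k x • z k‖ ^ 2
      = ∑ j, ∑ k, morawetzField R j x * morawetzField R k x * ⟪z j, z k⟫ := by
    rw [← real_inner_self_eq_norm_sq, sum_inner]
    simp only [inner_sum, real_inner_smul_left, real_inner_smul_right]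
    exact Finset.sum_congr rfl fun j _ => Finset.sum_congr rfl fun k _ => by ring
  simp only [hexpand, morawetzHess, sub_mul, ite_mul, zero_mul, Finset.sum_sub_distrib,
    Finset.sum_ite_eq, Finset.mem_univ, if_true, real_inner_self_eq_norm_sq, ← Finset.mul_sum,
    mul_sub, mul_assoc]

/-- The smallest eigenvalue of the Hessian of `√(R² + |x|²)` is the one in the radial direction. -/
theorem le_sum_morawetzHess_mul_inner {F : Type*} [SeminormedAddCommGroup F]
    [InnerProductSpace ℝ F] (hR : 0 < R) (z : Fin 3 → F) :
    R ^ 2 * bracketInv R x ^ 3 * ∑ k, ‖z k‖ ^ 2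
      ≤ ∑ j, ∑ k, morawetzHess R j k x * ⟪z j, z k⟫ := by
  rw [sum_morawetzHess_mul_inner]
  have hcs := norm_sum_smul_sq_le (fun k => morawetzField R k x) z
  rw [sum_morawetzField_sq hR] at hcs
  calc R ^ 2 * bracketInv R x ^ 3 * ∑ k, ‖z k‖ ^ 2
      = bracketInv R x * (∑ k, ‖z k‖ ^ 2
          - (1 - R ^ 2 * bracketInv R x ^ 2) * ∑ k, ‖z k‖ ^ 2) := by ring
    _ ≤ _ := mul_le_mul_of_nonneg_left (sub_le_sub_left hcs _) (bracketInv_pos hR).le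

end MorawetzWeight

section SchwartzFunctions

theorem hasLineDerivInLp_schwartzMap {E F : Type*} [NormedAddCommGroup E] [NormedSpace ℝ E]
    [MeasurableSpace E] [OpensMeasurableSpace E] [NormedAddCommGroup F] [NormedSpace ℝ F]
    [SecondCountableTopologyEither E F] (f : 𝓢(E, F)) (v : E) (p : ℝ≥0∞) (μ : Measure E)
    [μ.HasTemperateGrowth] : HasLineDerivInLp v p μ f (∂_{v} f : 𝓢(E, F)) where
  memLp := f.memLp p μ
  memLp_deriv := (∂_{v} f : 𝓢(E, F)).memLp p μ
  hasLineDerivAt x := by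
    rw [SchwartzMap.lineDerivOp_apply_eq_fderiv]
    exact f.differentiableAt.hasFDerivAt.hasLineDerivAt v

theorem norm_le_mul_norm_of_norm_fderiv_le {E F : Type*} [NormedAddCommGroup E] [NormedSpace ℝ E]
    [NormedAddCommGroup F] [NormedSpace ℝ F] {f : E → F} {C : ℝ} (hf : Differentiable ℝ f)
    (hC : ∀ x, ‖fderiv ℝ f x‖ ≤ C) (h0 : f 0 = 0) (x : E) : ‖f x‖ ≤ C * ‖x‖ := by
  simpa [h0] using convex_univ.norm_image_sub_le_of_norm_fderiv_le (𝕜 := ℝ) (f := f)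
    (fun y _ => hf y) (fun y _ => hC y) (Set.mem_univ 0) (Set.mem_univ x)

theorem exists_norm_le_schwartzMap {E F : Type*} [NormedAddCommGroup E] [NormedSpace ℝ E]
    [NormedAddCommGroup F] [NormedSpace ℝ F] (f : 𝓢(E, F)) : ∃ C, ∀ x, ‖f x‖ ≤ C := by
  obtain ⟨C, -, hC⟩ := f.decay 0 0
  exact ⟨C, fun x => by simpa using hC x⟩

theorem exists_norm_le_mul_norm_schwartzMap {E F : Type*} [NormedAddCommGroup E] [NormedSpace ℝ E]
    [NormedAddCommGroup F] [NormedSpace ℝ F] (f : 𝓢(E, F)) (h0 : f 0 = 0) :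
    ∃ C, ∀ x, ‖f x‖ ≤ C * ‖x‖ := by
  obtain ⟨C, -, hC⟩ := f.decay 0 1
  exact ⟨C, norm_le_mul_norm_of_norm_fderiv_le f.differentiable
    (fun x => by simpa [norm_iteratedFDeriv_one] using hC x) h0⟩

theorem pd_eq_lineDerivOp (f : 𝓢(E3, ℂ)) (j : Fin 3) : pd j f = ∂_{e3 j} f :=
  funext fun x => (SchwartzMap.lineDerivOp_apply_eq_fderiv (e3 j) f x).symm

theorem lap_eq_sum_lineDerivOp (f : 𝓢(E3, ℂ)) :
    lap f = ⇑(∑ k, ∂_{e3 k} (∂_{e3 k} f) : 𝓢(E3, ℂ)) := by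
  ext x
  simp only [lap, pd_eq_lineDerivOp, sum_apply]

theorem hasLineDerivInLp_pd (f : 𝓢(E3, ℂ)) (k : Fin 3) (p : ℝ≥0∞) :
    HasLineDerivInLp (e3 k) p volume f (pd k f) :=
  pd_eq_lineDerivOp f k ▸ hasLineDerivInLp_schwartzMap f (e3 k) p volume

theorem hasLineDerivInLp_pd_pd (f : 𝓢(E3, ℂ)) (j k : Fin 3) (p : ℝ≥0∞) :
    HasLineDerivInLp (e3 k) p volume (pd j f) (pd k (pd j f)) := by
  rw [pd_eq_lineDerivOp f j]
  exact hasLineDerivInLp_pd _ k p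

theorem pd_comm {f : E3 → ℂ} (hf : ContDiff ℝ 2 f) (j k : Fin 3) (x : E3) :
    pd k (pd j f) x = pd j (pd k f) x := by
  have hdiff : DifferentiableAt ℝ (fderiv ℝ f) x :=
    (hf.fderiv_right (m := 1) (by norm_num)).differentiable one_ne_zero x
  have hsecond (j k : Fin 3) : pd k (pd j f) x = fderiv ℝ (fderiv ℝ f) x (e3 k) (e3 j) := by
    have hpd : HasFDerivAt (pd j f) _ x := hdiff.hasFDerivAt.clm_apply (hasFDerivAt_const (e3 j) x)
    rw [pd, hpd.fderiv]
    simp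
  rw [hsecond, hsecond, hf.contDiffAt.isSymmSndFDerivAt (by simp)]

end SchwartzFunctions

section FixedTimeEquation

/-- The equation at a fixed time, for the values `f` of the solution and `g` of its time
derivative. -/
def SolvesINLS (a b lam : ℝ) (f g : E3 → ℂ) : Prop :=
  ∀ x : E3, x ≠ 0 → Complex.I * g x + lap f x - ((a / ‖x‖ ^ 2 : ℝ) : ℂ) * f x
    = (lam : ℂ) * ((‖x‖ ^ (-b) : ℝ) : ℂ) * ((‖f x‖ ^ 2 : ℝ) : ℂ) * f x

variable {a b lam : ℝ}

theorem SolvesINLS.eq_potential_smul {f g : E3 → ℂ} (h : SolvesINLS a b lam f g) {x : E3}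
    (hx : x ≠ 0) :
    Complex.I * g x + lap f x
      = (a * ‖x‖ ^ (-2 : ℝ) + lam * ‖f x‖ ^ 2 * ‖x‖ ^ (-b)) • f x := by
  have heq := h x hx
  rw [rpow_neg (norm_nonneg x), rpow_two, Complex.real_smul]
  push_cast at heq ⊢
  linear_combination heq

theorem SolvesINLS.apply_zero {f g : E3 → ℂ} (h : SolvesINLS a b lam f g) (hf : Continuous f)
    (hg : Continuous g) (hlap : Continuous (lap f)) (hb₀ : 0 < b) (hb₂ : b < 2) (hlam : lam ≠ 0) :
    f 0 = 0 := by
  rcases eq_or_ne a 0 with rfl | ha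
  · have hscaled : (fun x : E3 => (lam * ‖f x‖ ^ 2) • f x)
        = fun x => ‖x‖ ^ b • (Complex.I * g x + lap f x) := by
      refine Continuous.ext_on (dense_compl_singleton (0 : E3)) (by fun_prop) ?_ fun x hx => ?_
      · exact (continuous_norm.rpow_const fun x => .inr hb₀.le).smul (by fun_prop)
      · have hpos : 0 < ‖x‖ := norm_pos_iff.2 hx
        simp only [h.eq_potential_smul hx, smul_smul, zero_mul, zero_add]
        congr 1
        rw [rpow_neg hpos.le]
        field_simp
    have h0 := congrFun hscaled 0
    simpa [zero_rpow hb₀.ne', hlam] using h0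
  · have hscaled : (fun x : E3 => (a + lam * ‖f x‖ ^ 2 * ‖x‖ ^ (2 - b)) • f x)
        = fun x => ‖x‖ ^ 2 • (Complex.I * g x + lap f x) := by
      refine Continuous.ext_on (dense_compl_singleton (0 : E3)) ?_ (by fun_prop) fun x hx => ?_
      · have hpow : Continuous fun x : E3 => ‖x‖ ^ (2 - b) :=
          continuous_norm.rpow_const fun x => .inr (by linarith)
        fun_prop
      · have hpos : 0 < ‖x‖ := norm_pos_iff.2 hx
        simp only [h.eq_potential_smul hx, smul_smul]
        congr 1
        rw [rpow_neg hpos.le, rpow_neg hpos.le, rpow_sub hpos, rpow_two]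
        field_simp
    have h0 := congrFun hscaled 0
    simpa [zero_rpow (sub_pos.2 hb₂).ne', ha] using h0

end FixedTimeEquation

section FixedTimeMorawetz

variable {R : ℝ}

theorem hasLineDerivInLp_norm_sq (f : 𝓢(E3, ℂ)) (k : Fin 3) (p : ℝ≥0∞) :
    HasLineDerivInLp (e3 k) p volume (fun x => ‖f x‖ ^ 2) (fun x => 2 * ⟪f x, pd k f x⟫) := by
  have hinner := (hasLineDerivInLp_pd f k p).inner (r := p) (hasLineDerivInLp_pd f k ∞)
  simp only [real_inner_self_eq_norm_sq] at hinner
  refine hinner.congr_deriv fun x => ?_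
  rw [real_inner_comm (f x)]
  ring

theorem hasLineDerivInLp_norm_pow_four (f : 𝓢(E3, ℂ)) (k : Fin 3) (p : ℝ≥0∞) :
    HasLineDerivInLp (e3 k) p volume (fun x => ‖f x‖ ^ 4)
      (fun x => 4 * ‖f x‖ ^ 2 * ⟪f x, pd k f x⟫) := by
  have hmul := (hasLineDerivInLp_norm_sq f k p).mul (hasLineDerivInLp_norm_sq f k ∞) (r := p)
  simp only [← pow_add] at hmul
  exact hmul.congr_deriv fun x => by ring

theorem integratesToZero_virial {G ρ : E3 → ℝ} {G₁ W₁ : Fin 3 → E3 → ℝ} {c C C₁ : ℝ}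
    (hW : ∀ k, HasLineDerivInLp (e3 k) ∞ volume (fun x => x k * ρ x) (W₁ k))
    (hG : ∀ k, HasLineDerivInLp (e3 k) 1 volume G (G₁ k)) (hc₀ : 0 ≤ c) (hc₂ : c ≤ 2)
    (hC : ∀ x, ‖G x‖ ≤ C * ‖x‖ ^ 4) (hC₁ : ∀ k x, ‖G₁ k x‖ ≤ C₁ * ‖x‖ ^ 2) :
    IntegratesToZero volume fun x => ∑ k, (x k * ρ x * (G₁ k x * ‖x‖ ^ (-c))
      + W₁ k x * (G x * ‖x‖ ^ (-c))) - c * ρ x * (G x * ‖x‖ ^ (-c)) := by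
  have hsum : IntegratesToZero volume fun x : E3 => ∑ k, (x k * ρ x * (G₁ k x * ‖x‖ ^ (-c)
      - c * (⟪x, e3 k⟫ / ‖x‖ ^ 2 * (G x * ‖x‖ ^ (-c)))) + W₁ k x * (G x * ‖x‖ ^ (-c))) :=
    .sum fun k _ =>
      ((hW k).mul ((hG k).mul_rpow_norm hc₀ hc₂ hC (hC₁ k)) (r := 1)).integratesToZero
  refine hsum.congr fun x => ?_
  rcases eq_or_ne x 0 with rfl | hx
  · have hG_zero : G 0 = 0 := by simpa using hC 0
    simp [hG_zero]
  · have hpos : 0 < ‖x‖ ^ 2 := by positivity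
    have hradial := EuclideanSpace.real_norm_sq_eq x
    simp only [Fin.sum_univ_three, inner_e3] at hradial ⊢
    field_simp
    rw [hradial]
    ring

theorem exists_norm_pd_le (f : 𝓢(E3, ℂ)) : ∃ K, ∀ k x, ‖pd k f x‖ ≤ K := by
  choose K hK using fun k => exists_norm_le_schwartzMap (∂_{e3 k} f : 𝓢(E3, ℂ))
  obtain ⟨M, hM⟩ := (Set.finite_range K).bddAbove
  exact ⟨M, fun k x => pd_eq_lineDerivOp f k ▸ (hK k x).trans (hM ⟨k, rfl⟩)⟩

theorem integratesToZero_virial_inverseSquare {f : 𝓢(E3, ℂ)} {ρ : E3 → ℝ} {W₁ : Fin 3 → E3 → ℝ}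
    {C : ℝ} (hW : ∀ k, HasLineDerivInLp (e3 k) ∞ volume (fun x => x k * ρ x) (W₁ k))
    (hC : ∀ x, ‖f x‖ ≤ C * ‖x‖ ^ 2) :
    IntegratesToZero volume fun x => ∑ k, (x k * ρ x * (2 * ⟪f x, pd k f x⟫ * ‖x‖ ^ (-2 : ℝ))
      + W₁ k x * (‖f x‖ ^ 2 * ‖x‖ ^ (-2 : ℝ))) - 2 * ρ x * (‖f x‖ ^ 2 * ‖x‖ ^ (-2 : ℝ)) := by
  obtain ⟨K, hK⟩ := exists_norm_pd_le f
  refine integratesToZero_virial (C := C ^ 2) (C₁ := 2 * C * K) hW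
    (fun k => hasLineDerivInLp_norm_sq f k 1) zero_le_two le_rfl (fun x => ?_) fun k x => ?_
  · calc ‖‖f x‖ ^ 2‖ = ‖f x‖ ^ 2 := by simp
      _ ≤ (C * ‖x‖ ^ 2) ^ 2 := by gcongr; exact hC x
      _ = C ^ 2 * ‖x‖ ^ 4 := by ring
  · calc ‖2 * ⟪f x, pd k f x⟫‖ ≤ 2 * (‖f x‖ * ‖pd k f x‖) := by
          rw [norm_mul, Real.norm_two]
          gcongr
          exact norm_inner_le_norm _ _
      _ ≤ 2 * ((C * ‖x‖ ^ 2) * K) := by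
          gcongr
          exacts [(norm_nonneg _).trans (hC x), hC x, hK k x]
      _ = 2 * C * K * ‖x‖ ^ 2 := by ring

theorem integratesToZero_virial_quartic {f : 𝓢(E3, ℂ)} (h0 : f 0 = 0) {ρ : E3 → ℝ}
    {W₁ : Fin 3 → E3 → ℝ} {b : ℝ} (hb₀ : 0 ≤ b) (hb₂ : b ≤ 2)
    (hW : ∀ k, HasLineDerivInLp (e3 k) ∞ volume (fun x => x k * ρ x) (W₁ k)) :
    IntegratesToZero volume fun x =>
      ∑ k, (x k * ρ x * (4 * ‖f x‖ ^ 2 * ⟪f x, pd k f x⟫ * ‖x‖ ^ (-b))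
        + W₁ k x * (‖f x‖ ^ 4 * ‖x‖ ^ (-b))) - b * ρ x * (‖f x‖ ^ 4 * ‖x‖ ^ (-b)) := by
  obtain ⟨C, hC⟩ := exists_norm_le_mul_norm_schwartzMap f h0
  obtain ⟨M, hM⟩ := exists_norm_le_schwartzMap f
  obtain ⟨K, hK⟩ := exists_norm_pd_le f
  refine integratesToZero_virial (C := C ^ 4) (C₁ := 4 * C ^ 2 * M * K) hW
    (fun k => hasLineDerivInLp_norm_pow_four f k 1) hb₀ hb₂ (fun x => ?_) fun k x => ?_
  · calc ‖‖f x‖ ^ 4‖ = ‖f x‖ ^ 4 := by simp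
      _ ≤ (C * ‖x‖) ^ 4 := by gcongr; exact hC x
      _ = C ^ 4 * ‖x‖ ^ 4 := by ring
  · calc ‖4 * ‖f x‖ ^ 2 * ⟪f x, pd k f x⟫‖ ≤ 4 * ‖f x‖ ^ 2 * (‖f x‖ * ‖pd k f x‖) := by
          rw [norm_mul, norm_of_nonneg (by positivity)]
          gcongr
          exact norm_inner_le_norm _ _
      _ ≤ 4 * (C * ‖x‖) ^ 2 * (M * K) := by
          gcongr
          exacts [hC x, (norm_nonneg _).trans (hM x), hM x, hK k x]
      _ = 4 * C ^ 2 * M * K * ‖x‖ ^ 2 := by ring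

theorem rpow_norm_neg_two_mul_norm_sq {x : E3} (hx : x ≠ 0) : ‖x‖ ^ (-2 : ℝ) * ‖x‖ ^ 2 = 1 := by
  rw [rpow_neg (norm_nonneg x), rpow_two, inv_mul_cancel₀ (by positivity)]

theorem sum_norm_add_radial_sq {F : Type*} [SeminormedAddCommGroup F] [InnerProductSpace ℝ F]
    {x : E3} (hx : x ≠ 0) (w : F) (z : Fin 3 → F) :
    ∑ k, ‖(2 : ℝ) • z k + (x k * ‖x‖ ^ (-2 : ℝ)) • w‖ ^ 2
      = 4 * ∑ k, ‖z k‖ ^ 2 + 4 * (∑ k, x k * ⟪w, z k⟫) * ‖x‖ ^ (-2 : ℝ)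
        + ‖w‖ ^ 2 * ‖x‖ ^ (-2 : ℝ) := by
  have hinv := rpow_norm_neg_two_mul_norm_sq hx
  have hradial := EuclideanSpace.real_norm_sq_eq x
  simp only [Fin.sum_univ_three, norm_add_sq_real, norm_smul, mul_pow, real_inner_smul_right,
    Real.norm_eq_abs, sq_abs, real_inner_comm w] at hradial ⊢
  linear_combination ‖w‖ ^ 2 * ‖x‖ ^ (-2 : ℝ) * (hinv - ‖x‖ ^ (-2 : ℝ) * hradial)

theorem hasLineDerivInLp_coord_mul_bracketInv_cube (hR : 0 < R) (k : Fin 3) :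
    HasLineDerivInLp (e3 k) ∞ volume (fun x => x k * bracketInv R x ^ 3)
      (fun x => bracketInv R x ^ 2 * morawetzHess R k k x
        - 2 * bracketInv R x ^ 3 * morawetzField R k x ^ 2) := by
  have hprod := ((hasLineDerivInLp_bracketInv hR k).pow 2).mul
    (hasLineDerivInLp_morawetzField hR k k) (r := ∞)
  convert hprod using 2 with x x
  · rw [morawetzField]; ring
  · push_cast; ring

theorem integratesToZero_virial_bracketInv_cube (hR : 0 < R) {f : 𝓢(E3, ℂ)} {C : ℝ}
    (hC : ∀ x, ‖f x‖ ≤ C * ‖x‖ ^ 2) :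
    IntegratesToZero volume fun x =>
      2 * bracketInv R x ^ 3 * ((∑ k, x k * ⟪f x, pd k f x⟫) * ‖x‖ ^ (-2 : ℝ))
        + (3 * R ^ 2 * bracketInv R x ^ 5 - 2 * bracketInv R x ^ 3)
          * (‖f x‖ ^ 2 * ‖x‖ ^ (-2 : ℝ)) := by
  refine (integratesToZero_virial_inverseSquare
    (hasLineDerivInLp_coord_mul_bracketInv_cube hR) hC).congr fun x => ?_
  have hsq := sum_morawetzField_sq hR (x := x)
  have hdiag := sum_morawetzHess_diag hR (x := x)
  simp only [Fin.sum_univ_three, morawetzDiv] at hsq hdiag ⊢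
  linear_combination (bracketInv R x ^ 2 * hdiag - 2 * bracketInv R x ^ 3 * hsq)
    * (‖f x‖ ^ 2 * ‖x‖ ^ (-2 : ℝ))

/-- Expanding `∑ₖ ‖2 ∂ₖ f + xₖ f / |x|²‖²` produces, up to a virial identity, the sharp Hardy
constant; the last term on the right pays for the decay of the weight. -/
theorem exists_integratesToZero_hardy (hR : 0 < R) {f : 𝓢(E3, ℂ)} {C : ℝ}
    (hC : ∀ x, ‖f x‖ ≤ C * ‖x‖ ^ 2) :
    ∃ Z, IntegratesToZero volume Z ∧ ∀ x ≠ 0,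
      bracketInv R x * (‖f x‖ ^ 2 * ‖x‖ ^ (-2 : ℝ)) + Z x
        ≤ 4 * (R ^ 2 * bracketInv R x ^ 3 * ∑ k, ‖pd k f x‖ ^ 2)
          + 7 * bracketInv R x ^ 3 * ‖f x‖ ^ 2 := by
  refine ⟨_, (integratesToZero_virial_bracketInv_cube hR hC).const_mul (-(2 * R ^ 2)),
    fun x hx => ?_⟩
  have hs : 0 < bracketInv R x := bracketInv_pos hR
  have hbracket := bracketInv_sq_mul hR (x := x)
  have hinv := rpow_norm_neg_two_mul_norm_sq hx
  have hsquare : 0 ≤ R ^ 2 * bracketInv R x ^ 3 * (4 * ∑ k, ‖pd k f x‖ ^ 2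
      + 4 * (∑ k, x k * ⟪f x, pd k f x⟫) * ‖x‖ ^ (-2 : ℝ) + ‖f x‖ ^ 2 * ‖x‖ ^ (-2 : ℝ)) := by
    rw [← sum_norm_add_radial_sq hx (f x) fun k => pd k f x]
    positivity
  have hrest : 0 ≤ 6 * bracketInv R x * (bracketInv R x ^ 2 * ‖x‖ ^ 2) ^ 2
      * (‖f x‖ ^ 2 * ‖x‖ ^ (-2 : ℝ)) := by positivity
  linear_combination hsquare + hrest
    - bracketInv R x * (‖f x‖ ^ 2 * ‖x‖ ^ (-2 : ℝ))
      * (6 * bracketInv R x ^ 2 * (R ^ 2 - ‖x‖ ^ 2) + 1) * hbracket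
    + 7 * bracketInv R x ^ 3 * ‖f x‖ ^ 2 * hinv

end FixedTimeMorawetz

section Momentum

variable {a b lam : ℝ} {f g : 𝓢(E3, ℂ)}

theorem exists_norm_sq_mul_rpow_le (h0 : f 0 = 0) (hb₀ : 0 ≤ b) (hb₂ : b ≤ 2) :
    ∃ C, ∀ x, ‖f x‖ ^ 2 * ‖x‖ ^ (-b) ≤ C := by
  obtain ⟨K, hK⟩ := exists_norm_le_schwartzMap f
  obtain ⟨L, hL⟩ := exists_norm_le_mul_norm_schwartzMap f h0
  refine ⟨K ^ 2 + L ^ 2, fun x => ?_⟩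
  rcases le_total ‖x‖ 1 with hx | hx
  · calc ‖f x‖ ^ 2 * ‖x‖ ^ (-b) ≤ (L * ‖x‖) ^ 2 * ‖x‖ ^ (-b) := by gcongr; exact hL x
      _ = L ^ 2 * ‖x‖ ^ 2 * ‖x‖ ^ (-b) := by ring
      _ ≤ L ^ 2 := mul_pow_mul_rpow_neg_le (norm_nonneg x) hx two_pos (sq_nonneg L) (mod_cast hb₂)
      _ ≤ K ^ 2 + L ^ 2 := le_add_of_nonneg_left (sq_nonneg K)
  · calc ‖f x‖ ^ 2 * ‖x‖ ^ (-b) ≤ K ^ 2 * 1 := by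
          gcongr
          exacts [hK x, rpow_le_one_of_one_le_of_nonpos hx (neg_nonpos.2 hb₀)]
      _ ≤ K ^ 2 + L ^ 2 := by rw [mul_one]; exact le_add_of_nonneg_right (sq_nonneg L)

theorem SolvesINLS.exists_norm_le_mul_norm_sq (h : SolvesINLS a b lam f g) (h0 : f 0 = 0)
    (hb₀ : 0 ≤ b) (hb₂ : b ≤ 2) (ha : a ≠ 0) : ∃ C, ∀ x, ‖f x‖ ≤ C * ‖x‖ ^ 2 := by
  obtain ⟨N, hN⟩ := exists_norm_sq_mul_rpow_le h0 hb₀ hb₂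
  obtain ⟨K, hK⟩ := exists_norm_le_schwartzMap f
  obtain ⟨H, hH⟩ := exists_norm_le_schwartzMap
    (Complex.I • g + ∑ k, ∂_{e3 k} (∂_{e3 k} f) : 𝓢(E3, ℂ))
  refine ⟨(H + |lam| * N * K) / |a|, fun x => ?_⟩
  rcases eq_or_ne x 0 with rfl | hx
  · simp [h0]
  have hlinear : ‖Complex.I * g x + lap f x‖ ≤ H := by
    simpa [lap_eq_sum_lineDerivOp] using hH x
  have hN₀ : 0 ≤ N := (by positivity : 0 ≤ ‖f x‖ ^ 2 * ‖x‖ ^ (-b)).trans (hN x)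
  have hnonlinear : ‖(lam * (‖f x‖ ^ 2 * ‖x‖ ^ (-b))) • f x‖ ≤ |lam| * N * K := by
    rw [norm_smul, norm_mul, Real.norm_eq_abs, norm_of_nonneg (by positivity)]
    gcongr
    exacts [hN x, hK x]
  have hpotential : (a * ‖x‖ ^ (-2 : ℝ)) • f x
      = (Complex.I * g x + lap f x) - (lam * (‖f x‖ ^ 2 * ‖x‖ ^ (-b))) • f x := by
    rw [h.eq_potential_smul hx, ← sub_smul]
    congr 1
    ring
  have hbound : |a| * ‖f x‖ * ‖x‖ ^ (-2 : ℝ) ≤ H + |lam| * N * K :=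
    calc |a| * ‖f x‖ * ‖x‖ ^ (-2 : ℝ) = ‖(a * ‖x‖ ^ (-2 : ℝ)) • f x‖ := by
          rw [norm_smul, norm_mul, Real.norm_eq_abs, norm_of_nonneg (by positivity)]; ring
      _ ≤ H + |lam| * N * K := hpotential ▸ (norm_sub_le _ _).trans (add_le_add hlinear hnonlinear)
  have hinv := rpow_norm_neg_two_mul_norm_sq hx
  rw [div_mul_eq_mul_div, le_div_iff₀ (abs_pos.2 ha)]
  calc ‖f x‖ * |a| = |a| * ‖f x‖ * ‖x‖ ^ (-2 : ℝ) * ‖x‖ ^ 2 := by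
        linear_combination -(|a| * ‖f x‖) * hinv
    _ ≤ (H + |lam| * N * K) * ‖x‖ ^ 2 := by gcongr

/-- The momentum density of `f` along the Morawetz vector field. -/
def momentumDensity (R : ℝ) (f : E3 → ℂ) (x : E3) : ℝ :=
  2 * ∑ j, morawetzField R j x * ⟪Complex.I * f x, pd j f x⟫

/-- The time derivative of `momentumDensity` when `g` is the time derivative of `f`. -/
def momentumRate (R : ℝ) (f g : E3 → ℂ) (x : E3) : ℝ :=
  2 * ∑ j, morawetzField R j x *
    (⟪Complex.I * g x, pd j f x⟫ + ⟪Complex.I * f x, pd j g x⟫)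

theorem inner_I_mul_left (z w : ℂ) : ⟪Complex.I * z, w⟫ = -⟪z, Complex.I * w⟫ := by
  simp only [Complex.inner, map_mul, Complex.conj_I, Complex.mul_re, Complex.mul_im,
    Complex.conj_re, Complex.conj_im, Complex.neg_re, Complex.neg_im, Complex.I_re, Complex.I_im]
  ring

variable {R : ℝ}

theorem integratesToZero_momentumRate_by_parts (hR : 0 < R) (f g : 𝓢(E3, ℂ)) :
    IntegratesToZero volume fun x => momentumRate R f g x
      - (4 * ∑ j, morawetzField R j x * ⟪pd j f x, Complex.I * g x⟫
        + 2 * morawetzDiv R x * ⟪f x, Complex.I * g x⟫) := by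
  let mulI := ContinuousLinearMap.mul ℝ ℂ Complex.I
  have hsum : IntegratesToZero volume fun x => ∑ j,
      (morawetzField R j x * (⟪Complex.I * f x, pd j g x⟫ + ⟪Complex.I * pd j f x, g x⟫)
        + morawetzHess R j j x * ⟪Complex.I * f x, g x⟫) :=
    .sum fun j _ => ((hasLineDerivInLp_morawetzField hR j j).mul
      (((hasLineDerivInLp_pd f j 2).clm_apply mulI).inner (r := 1)
        (hasLineDerivInLp_pd g j 2)) (r := 1)).integratesToZero
  refine (hsum.const_mul 2).congr fun x => ?_
  have hdiag := sum_morawetzHess_diag hR (x := x)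
  simp only [momentumRate, Fin.sum_univ_three, inner_I_mul_left _ (g x),
    real_inner_comm (pd _ f x) (Complex.I * g x)] at hdiag ⊢
  linear_combination -2 * ⟪f x, Complex.I * g x⟫ * hdiag

theorem integratesToZero_kinetic (hR : 0 < R) (f : 𝓢(E3, ℂ)) :
    IntegratesToZero volume fun x => 4 * ∑ j, morawetzField R j x * ⟪pd j f x, lap f x⟫
      + 2 * morawetzDiv R x * ⟪f x, lap f x⟫
      + (4 * ∑ j, ∑ k, morawetzHess R j k x * ⟪pd j f x, pd k f x⟫
        + 15 * R ^ 4 * bracketInv R x ^ 7 * ‖f x‖ ^ 2) := by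
  have hvector := integratesToZero_vectorField_multiplier
    (hasLineDerivInLp_morawetzField hR) (fun j k => hasLineDerivInLp_pd_pd f j k 2)
    fun j k x => pd_comm (f.smooth 2) j k x
  have hscalar := integratesToZero_scalar_multiplier (hasLineDerivInLp_morawetzDiv hR)
    (hasLineDerivInLp_morawetzDivGrad hR) (fun k => hasLineDerivInLp_pd f k 2)
    fun j k => hasLineDerivInLp_pd_pd f j k 2
  refine ((hvector.const_mul 2).add hscalar).congr fun x => ?_
  have hdiag := sum_morawetzHess_diag hR (x := x)
  have hbilap := sum_morawetzDivHess hR (x := x)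
  simp only [lap, inner_add_right, Fin.sum_univ_three] at hdiag hbilap ⊢
  linear_combination -2 * (‖pd 0 f x‖ ^ 2 + ‖pd 1 f x‖ ^ 2 + ‖pd 2 f x‖ ^ 2) * hdiag
    - ‖f x‖ ^ 2 * hbilap

theorem integratesToZero_inverseSquare (hR : 0 < R) {C : ℝ} (hC : ∀ x, ‖f x‖ ≤ C * ‖x‖ ^ 2) :
    IntegratesToZero volume fun x =>
      (4 * ∑ j, morawetzField R j x * ⟪pd j f x, f x⟫ + 2 * morawetzDiv R x * ‖f x‖ ^ 2)
          * ‖x‖ ^ (-2 : ℝ)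
        - 4 * bracketInv R x * (‖f x‖ ^ 2 * ‖x‖ ^ (-2 : ℝ)) := by
  have hvirial := integratesToZero_virial_inverseSquare (ρ := bracketInv R)
    (fun k => hasLineDerivInLp_morawetzField hR k k) hC
  refine (hvirial.const_mul 2).congr fun x => ?_
  have hdiag := sum_morawetzHess_diag hR (x := x)
  simp only [Fin.sum_univ_three, morawetzField, real_inner_comm (f x) (pd _ f x)] at hdiag ⊢
  linear_combination 2 * (‖f x‖ ^ 2 * ‖x‖ ^ (-2 : ℝ)) * hdiag

theorem integratesToZero_quartic (hR : 0 < R) (h0 : f 0 = 0) (hb₀ : 0 ≤ b) (hb₂ : b ≤ 2) :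
    IntegratesToZero volume fun x =>
      (4 * ∑ j, morawetzField R j x * ⟪pd j f x, f x⟫ + 2 * morawetzDiv R x * ‖f x‖ ^ 2)
          * (‖f x‖ ^ 2 * ‖x‖ ^ (-b))
        - (morawetzDiv R x + b * bracketInv R x) * (‖f x‖ ^ 4 * ‖x‖ ^ (-b)) := by
  have hvirial := integratesToZero_virial_quartic (ρ := bracketInv R) h0 hb₀ hb₂
    (fun k => hasLineDerivInLp_morawetzField hR k k)
  refine hvirial.congr fun x => ?_
  have hdiag := sum_morawetzHess_diag hR (x := x)
  simp only [Fin.sum_univ_three, morawetzField, real_inner_comm (f x) (pd _ f x)] at hdiag ⊢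
  linear_combination (‖f x‖ ^ 4 * ‖x‖ ^ (-b)) * hdiag

theorem SolvesINLS.integratesToZero_momentumRate_sub (h : SolvesINLS a b lam f g) (hR : 0 < R)
    (h0 : f 0 = 0) (hb₀ : 0 ≤ b) (hb₂ : b ≤ 2) :
    IntegratesToZero volume fun x => momentumRate R f g x
      - (4 * ∑ j, ∑ k, morawetzHess R j k x * ⟪pd j f x, pd k f x⟫
        + 15 * R ^ 4 * bracketInv R x ^ 7 * ‖f x‖ ^ 2
        + 4 * a * bracketInv R x * (‖f x‖ ^ 2 * ‖x‖ ^ (-2 : ℝ))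
        + lam * (morawetzDiv R x + b * bracketInv R x) * (‖f x‖ ^ 4 * ‖x‖ ^ (-b))) := by
  have hpotential : IntegratesToZero volume fun x => a *
      ((4 * ∑ j, morawetzField R j x * ⟪pd j f x, f x⟫ + 2 * morawetzDiv R x * ‖f x‖ ^ 2)
          * ‖x‖ ^ (-2 : ℝ)
        - 4 * bracketInv R x * (‖f x‖ ^ 2 * ‖x‖ ^ (-2 : ℝ))) := by
    rcases eq_or_ne a 0 with rfl | ha
    · simpa using IntegratesToZero.zero
    · obtain ⟨C, hC⟩ := h.exists_norm_le_mul_norm_sq h0 hb₀ hb₂ ha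
      exact (integratesToZero_inverseSquare hR hC).const_mul a
  refine ((((integratesToZero_momentumRate_by_parts hR f g).add
    ((integratesToZero_kinetic hR f).const_mul (-1))).add hpotential).add
    ((integratesToZero_quartic hR h0 hb₀ hb₂).const_mul lam)).congr_ae ?_
  filter_upwards [Measure.ae_ne volume 0] with x hx
  have hsubst : Complex.I * g x = (a * ‖x‖ ^ (-2 : ℝ) + lam * ‖f x‖ ^ 2 * ‖x‖ ^ (-b)) • f x
      - lap f x := eq_sub_of_add_eq (h.eq_potential_smul hx)
  simp only [hsubst, inner_sub_right, real_inner_smul_right, real_inner_self_eq_norm_sq,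
    Fin.sum_univ_three]
  ring

theorem SolvesINLS.exists_integratesToZero_le_potential (h : SolvesINLS a b lam f g)
    (ha : -(1 / 4) ≤ a) (hR : 0 < R) (h0 : f 0 = 0) (hb₀ : 0 ≤ b) (hb₂ : b ≤ 2) :
    ∃ Z, IntegratesToZero volume Z ∧ ∀ x ≠ 0,
      Z x ≤ 4 * a * bracketInv R x * (‖f x‖ ^ 2 * ‖x‖ ^ (-2 : ℝ))
        + 4 * (R ^ 2 * bracketInv R x ^ 3 * ∑ k, ‖pd k f x‖ ^ 2)
        + 7 * bracketInv R x ^ 3 * ‖f x‖ ^ 2 := by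
  have hs (x : E3) : 0 < bracketInv R x := bracketInv_pos hR
  rcases le_or_gt 0 a with ha₀ | ha₀
  · refine ⟨_, .zero, fun x _ => ?_⟩
    have := hs x
    positivity
  · obtain ⟨C, hC⟩ := h.exists_norm_le_mul_norm_sq h0 hb₀ hb₂ ha₀.ne
    obtain ⟨Z, hZ, hardy⟩ := exists_integratesToZero_hardy hR hC
    refine ⟨Z, hZ, fun x hx => ?_⟩
    have hκ : 0 ≤ bracketInv R x * (‖f x‖ ^ 2 * ‖x‖ ^ (-2 : ℝ)) := by
      have := hs x
      positivity
    linarith [hardy x hx, mul_nonneg (by linarith : 0 ≤ 1 + 4 * a) hκ]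

theorem SolvesINLS.exists_integratesToZero_le_momentumRate (h : SolvesINLS a b lam f g)
    (ha : -(1 / 4) ≤ a) (hR : 0 < R) (h0 : f 0 = 0) (hb₀ : 0 ≤ b) (hb₂ : b ≤ 2)
    (hlam : 0 ≤ lam) : ∃ Z, IntegratesToZero volume Z ∧ ∀ x ≠ 0,
      2 * lam * bracketInv R x * (‖f x‖ ^ 4 * ‖x‖ ^ (-b))
        ≤ momentumRate R f g x + 7 * bracketInv R x ^ 3 * ‖f x‖ ^ 2 + Z x := by
  obtain ⟨Z, hZ, hpotential⟩ := h.exists_integratesToZero_le_potential ha hR h0 hb₀ hb₂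
  refine ⟨_, ((h.integratesToZero_momentumRate_sub hR h0 hb₀ hb₂).add hZ).const_mul (-1),
    fun x hx => ?_⟩
  have hs : 0 < bracketInv R x := bracketInv_pos hR
  have hkinetic := le_sum_morawetzHess_mul_inner hR (x := x) fun k => pd k f x
  have hbilap : 0 ≤ 15 * R ^ 4 * bracketInv R x ^ 7 * ‖f x‖ ^ 2 := by positivity
  have hquartic : 2 * lam * bracketInv R x * (‖f x‖ ^ 4 * ‖x‖ ^ (-b))
      ≤ lam * (morawetzDiv R x + b * bracketInv R x) * (‖f x‖ ^ 4 * ‖x‖ ^ (-b)) := by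
    rw [mul_comm 2, mul_assoc lam]
    gcongr
    rw [morawetzDiv, add_assoc]
    exact le_add_of_nonneg_right (by positivity)
  linarith [hpotential x hx]

theorem integrable_momentumRate (hR : 0 < R) (f g : 𝓢(E3, ℂ)) :
    Integrable (momentumRate R f g) := by
  let mulI := ContinuousLinearMap.mul ℝ ℂ Complex.I
  have hleft (j : Fin 3) := (hasLineDerivInLp_morawetzField hR j j).mul
    (((hasLineDerivInLp_pd g j 2).clm_apply mulI).inner (r := 1)
      (hasLineDerivInLp_pd_pd f j j 2)) (r := 1)
  have hright (j : Fin 3) := (hasLineDerivInLp_morawetzField hR j j).mul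
    (((hasLineDerivInLp_pd f j 2).clm_apply mulI).inner (r := 1)
      (hasLineDerivInLp_pd_pd g j j 2)) (r := 1)
  refine (integrable_finsetSum _ fun j _ => ?_).const_mul 2
  simp only [mul_add]
  exact memLp_one_iff_integrable.1 ((hleft j).memLp.add (hright j).memLp)

theorem SolvesINLS.mul_setIntegral_le (h : SolvesINLS a b lam f g) (ha : -(1 / 4) ≤ a)
    (hR : 0 < R) (hb₀ : 0 < b) (hb₂ : b < 2) (hlam : 0 < lam) :
    lam * R⁻¹ * ∫ x in Metric.closedBall (0 : E3) R, ‖f x‖ ^ 4 * ‖x‖ ^ (-b)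
      ≤ (∫ x, momentumRate R f g x) + 7 * R⁻¹ ^ 3 * ∫ x, ‖f x‖ ^ 2 := by
  have h0 : f 0 = 0 := h.apply_zero f.continuous g.continuous
    (lap_eq_sum_lineDerivOp f ▸ SchwartzMap.continuous _) hb₀ hb₂ hlam.ne'
  obtain ⟨Z, hZ, hle⟩ := h.exists_integratesToZero_le_momentumRate ha hR h0 hb₀.le hb₂.le hlam.le
  have hmomentum := integrable_momentumRate hR f g
  have hmass : Integrable fun x => 7 * R⁻¹ ^ 3 * ‖f x‖ ^ 2 :=
    (memLp_one_iff_integrable.1 (hasLineDerivInLp_norm_sq f 0 1).memLp).const_mul _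
  rw [← integral_const_mul, ← integral_const_mul, ← integral_add hmomentum hmass]
  refine hZ.setIntegral_le Metric.isClosed_closedBall.measurableSet (fun x => by positivity)
    (hmomentum.add hmass) ?_
  filter_upwards [Measure.ae_ne volume (0 : E3)] with x hx
  have hs : 0 < bracketInv R x := bracketInv_pos hR
  have hball : (Metric.closedBall (0 : E3) R).indicator
      (fun x => lam * R⁻¹ * (‖f x‖ ^ 4 * ‖x‖ ^ (-b))) x
        ≤ 2 * lam * bracketInv R x * (‖f x‖ ^ 4 * ‖x‖ ^ (-b)) := by
    refine Set.indicator_apply_le' (fun hmem => ?_) fun _ => by positivity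
    rw [mul_right_comm 2, mul_comm lam]
    gcongr
    exact inv_le_two_mul_bracketInv hR (by simpa using hmem)
  have hcube : 7 * bracketInv R x ^ 3 * ‖f x‖ ^ 2 ≤ 7 * R⁻¹ ^ 3 * ‖f x‖ ^ 2 := by
    gcongr
    exact bracketInv_le hR
  exact hball.trans ((hle x hx).trans (by gcongr))

end Momentum

section MomentumSize

variable {R : ℝ}

theorem integrable_momentumDensity (hR : 0 < R) (f : 𝓢(E3, ℂ)) :
    Integrable (momentumDensity R f) := by
  let mulI := ContinuousLinearMap.mul ℝ ℂ Complex.I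
  exact (integrable_finsetSum _ fun j _ => memLp_one_iff_integrable.1
    ((hasLineDerivInLp_morawetzField hR j j).mul (((hasLineDerivInLp_pd f j 2).clm_apply mulI).inner
      (r := 1) (hasLineDerivInLp_pd_pd f j j 2)) (r := 1)).memLp).const_mul 2

theorem norm_momentumDensity_le (hR : 0 < R) (f : E3 → ℂ) (x : E3) :
    ‖momentumDensity R f x‖ ≤ ‖f x‖ ^ 2 + ∑ j, ‖pd j f x‖ ^ 2 := by
  have hflux : ‖∑ j, morawetzField R j x • pd j f x‖ ^ 2 ≤ ∑ j, ‖pd j f x‖ ^ 2 := by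
    refine (norm_sum_smul_sq_le _ _).trans (mul_le_of_le_one_left (by positivity) ?_)
    rw [sum_morawetzField_sq hR]
    exact sub_le_self 1 (by positivity)
  calc ‖momentumDensity R f x‖
      = ‖2 * ⟪Complex.I * f x, ∑ j, morawetzField R j x • pd j f x⟫‖ := by
        simp only [momentumDensity, inner_sum, real_inner_smul_right]
    _ ≤ 2 * (‖f x‖ * ‖∑ j, morawetzField R j x • pd j f x‖) := by
        rw [norm_mul, Real.norm_two]
        gcongr
        refine (norm_inner_le_norm (𝕜 := ℝ) _ _).trans_eq ?_
        rw [norm_mul, Complex.norm_I, one_mul]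
    _ ≤ ‖f x‖ ^ 2 + ‖∑ j, morawetzField R j x • pd j f x‖ ^ 2 := by
        rw [← mul_assoc]
        exact two_mul_le_add_sq _ _
    _ ≤ ‖f x‖ ^ 2 + ∑ j, ‖pd j f x‖ ^ 2 := by gcongr

theorem norm_momentumRate_le (hR : 0 < R) {f g : E3 → ℂ} {x : E3} {A : ℝ} (hf : ‖f x‖ ≤ A)
    (hg : ‖g x‖ ≤ A) (hpf : ∀ j, ‖pd j f x‖ ≤ A) (hpg : ∀ j, ‖pd j g x‖ ≤ A) :
    ‖momentumRate R f g x‖ ≤ 12 * A ^ 2 := by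
  have hinner {z w : ℂ} (hz : ‖z‖ ≤ A) (hw : ‖w‖ ≤ A) : ‖⟪Complex.I * z, w⟫‖ ≤ A ^ 2 := by
    refine (norm_inner_le_norm (𝕜 := ℝ) _ _).trans ?_
    rw [norm_mul, Complex.norm_I, one_mul, sq]
    gcongr
    exact (norm_nonneg z).trans hz
  have hterm (j : Fin 3) : ‖morawetzField R j x *
      (⟪Complex.I * g x, pd j f x⟫ + ⟪Complex.I * f x, pd j g x⟫)‖ ≤ 1 * (A ^ 2 + A ^ 2) := by
    rw [norm_mul]
    gcongr
    · exact norm_morawetzField_le_one hR j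
    · exact (norm_add_le _ _).trans (add_le_add (hinner hg (hpf j)) (hinner hf (hpg j)))
  calc ‖momentumRate R f g x‖ ≤ 2 * ∑ _j : Fin 3, 1 * (A ^ 2 + A ^ 2) := by
        rw [momentumRate, norm_mul, Real.norm_two]
        gcongr
        exact norm_sum_le_of_le _ fun j _ => hterm j
    _ = 12 * A ^ 2 := by
        rw [Finset.sum_const, Finset.card_univ, Fintype.card_fin, nsmul_eq_mul]
        push_cast
        ring

theorem integrable_norm_sq_add_sum_norm_pd_sq (f : 𝓢(E3, ℂ)) :
    Integrable fun x => ‖f x‖ ^ 2 + ∑ j, ‖pd j f x‖ ^ 2 :=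
  (f.memLp 2).integrable_norm_pow two_ne_zero |>.add <| integrable_finsetSum _ fun j _ =>
    (hasLineDerivInLp_pd f j 2).memLp_deriv.integrable_norm_pow two_ne_zero

theorem norm_integral_momentumDensity_schwartzMap_le (hR : 0 < R) (f : 𝓢(E3, ℂ)) :
    ‖∫ x, momentumDensity R f x‖ ≤ ∫ x, (‖f x‖ ^ 2 + ∑ j, ‖pd j f x‖ ^ 2) :=
  norm_integral_le_of_norm_le (integrable_norm_sq_add_sum_norm_pd_sq f)
    (.of_forall (norm_momentumDensity_le hR f))

theorem integral_norm_sq_le (f : 𝓢(E3, ℂ)) :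
    ∫ x, ‖f x‖ ^ 2 ≤ ∫ x, (‖f x‖ ^ 2 + ∑ j, ‖pd j f x‖ ^ 2) :=
  integral_mono ((f.memLp 2).integrable_norm_pow two_ne_zero)
    (integrable_norm_sq_add_sum_norm_pd_sq f) fun _ => le_add_of_nonneg_right (by positivity)

end MomentumSize

section TimeDerivative

variable {E F : Type*} [NormedAddCommGroup E] [NormedSpace ℝ E] [NormedAddCommGroup F]
  [NormedSpace ℝ F]

/-- The partial derivative `∂ₜu(t, ·)` of a function of time and space. -/
def timeDeriv (u : ℝ → E → F) (t : ℝ) (x : E) : F := deriv (fun s => u s x) t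

theorem hasDerivAt_apply_prodMk_left {V : ℝ × E → F} (hV : Differentiable ℝ V) (t : ℝ) (x : E) :
    HasDerivAt (fun s => V (s, x)) (fderiv ℝ V (t, x) (1, 0)) t :=
  (hV (t, x)).hasFDerivAt.comp_hasDerivAt (f := fun s => (s, x)) t
    ((hasDerivAt_id t).prodMk (hasDerivAt_const t x))

theorem hasFDerivAt_apply_prodMk_right {V : ℝ × E → F} (hV : Differentiable ℝ V) (t : ℝ) (x : E) :
    HasFDerivAt (fun y => V (t, y)) ((fderiv ℝ V (t, x)).comp (ContinuousLinearMap.inr ℝ ℝ E)) x :=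
  (hV (t, x)).hasFDerivAt.comp (f := fun y => (t, y)) x (hasFDerivAt_prodMk_right t x)

variable {u : ℝ → E → F}

theorem hasDerivAt_timeDeriv (hu : Differentiable ℝ (Function.uncurry u)) (t : ℝ) (x : E) :
    HasDerivAt (fun s => u s x) (timeDeriv u t x) t :=
  (hasDerivAt_apply_prodMk_left hu t x).differentiableAt.hasDerivAt

theorem hasDerivAt_fderiv_timeDeriv (hu : ContDiff ℝ 2 (Function.uncurry u)) (v : E) (t : ℝ)
    (x : E) : HasDerivAt (fun s => fderiv ℝ (u s) x v) (fderiv ℝ (timeDeriv u t) x v) t := by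
  have hdiff : Differentiable ℝ (Function.uncurry u) := hu.differentiable two_ne_zero
  have hdiff' : Differentiable ℝ (fderiv ℝ (Function.uncurry u)) :=
    (hu.fderiv_right (m := 1) (by norm_num)).differentiable one_ne_zero
  have htime : timeDeriv u t = fun y => fderiv ℝ (Function.uncurry u) (t, y) (1, 0) :=
    funext fun y => (hasDerivAt_apply_prodMk_left hdiff t y).deriv
  have hspace : (fun s => fderiv ℝ (u s) x v)
      = fun s => fderiv ℝ (Function.uncurry u) (s, x) (0, v) :=
    funext fun s => congrArg (· v) (hasFDerivAt_apply_prodMk_right hdiff s x).fderiv |>.trans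
      (by simp)
  have hmixed : fderiv ℝ (timeDeriv u t) x v
      = fderiv ℝ (fderiv ℝ (Function.uncurry u)) (t, x) (1, 0) (0, v) := by
    rw [htime, ((hasFDerivAt_apply_prodMk_right hdiff' t x).clm_apply
      (hasFDerivAt_const _ x)).fderiv, ← hu.contDiffAt.isSymmSndFDerivAt (by simp)]
    simp
  rw [hspace, hmixed]
  simpa using (hasDerivAt_apply_prodMk_left hdiff' t x).clm_apply
    (hasDerivAt_const t ((0 : ℝ), v))

end TimeDerivative

namespace IsSchwartzSolution

variable {a b lam R T : ℝ} {u : ℝ → E3 → ℂ}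

theorem solvesINLS (h : IsSchwartzSolution a b lam u) (t : ℝ) :
    SolvesINLS a b lam (u t) (timeDeriv u t) :=
  h.eqn t

theorem exists_schwartzMap_eq (h : IsSchwartzSolution a b lam u) (t : ℝ) :
    ∃ f g : 𝓢(E3, ℂ), u t = f ∧ timeDeriv u t = g := by
  obtain ⟨f, hf⟩ := h.schwartz t
  obtain ⟨g, hg⟩ := h.schwartz_dt t
  exact ⟨f, g, funext fun x => (hf x).symm, funext fun x => (hg x).symm⟩

theorem exists_norm_iteratedFDeriv_le (h : IsSchwartzSolution a b lam u) (hT : 0 < T) (l n : ℕ) :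
    ∃ C, ∀ t ∈ Set.Icc (-T) T, ∀ x,
      ‖iteratedFDeriv ℝ n (u t) x‖ ≤ C * (1 + ‖x‖) ^ (-(l : ℝ)) ∧
      ‖iteratedFDeriv ℝ n (timeDeriv u t) x‖ ≤ C * (1 + ‖x‖) ^ (-(l : ℝ)) := by
  obtain ⟨C₀, hC₀⟩ := h.unif_bound 0 n T hT
  obtain ⟨C₁, hC₁⟩ := h.unif_bound l n T hT
  refine ⟨2 ^ l * (C₀ + C₁), fun t ht x => ?_⟩
  have hbound {y : ℝ} (hy : 0 ≤ y) (hy₀ : ‖x‖ ^ 0 * y ≤ C₀) (hy₁ : ‖x‖ ^ l * y ≤ C₁) :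
      y ≤ 2 ^ l * (C₀ + C₁) * (1 + ‖x‖) ^ (-(l : ℝ)) := by
    simpa using pow_mul_le_of_le_of_pow_mul_le (k := 0) (l := l) (norm_nonneg x) hy
      (by simpa using hy₀) (by simpa using hy₁)
  exact ⟨hbound (norm_nonneg _)
      ((le_add_of_nonneg_right (by positivity)).trans (hC₀ t ht x))
      ((le_add_of_nonneg_right (by positivity)).trans (hC₁ t ht x)),
    hbound (norm_nonneg _)
      ((le_add_of_nonneg_left (by positivity)).trans (hC₀ t ht x))
      ((le_add_of_nonneg_left (by positivity)).trans (hC₁ t ht x))⟩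

theorem exists_norm_le (h : IsSchwartzSolution a b lam u) (hT : 0 < T) :
    ∃ C, ∀ t ∈ Set.Icc (-T) T, ∀ x, ‖u t x‖ ≤ C := by
  obtain ⟨C, hC⟩ := h.exists_norm_iteratedFDeriv_le hT 0 0
  exact ⟨C, fun t ht x => by simpa using (hC t ht x).1⟩

theorem exists_norm_momentumRate_le (h : IsSchwartzSolution a b lam u) (hR : 0 < R) (hT : 0 < T) :
    ∃ C, ∀ t ∈ Set.Icc (-T) T, ∀ x,
      ‖momentumRate R (u t) (timeDeriv u t) x‖ ≤ C * (1 + ‖x‖) ^ (-4 : ℝ) := by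
  obtain ⟨C₀, hC₀⟩ := h.exists_norm_iteratedFDeriv_le hT 2 0
  obtain ⟨C₁, hC₁⟩ := h.exists_norm_iteratedFDeriv_le hT 2 1
  simp only [norm_iteratedFDeriv_zero, norm_iteratedFDeriv_one] at hC₀ hC₁
  refine ⟨12 * max C₀ C₁ ^ 2, fun t ht x => ?_⟩
  have hpd {f : E3 → ℂ} (hf : ‖fderiv ℝ f x‖ ≤ C₁ * (1 + ‖x‖) ^ (-((2 : ℕ) : ℝ))) (j : Fin 3) :
      ‖pd j f x‖ ≤ max C₀ C₁ * (1 + ‖x‖) ^ (-((2 : ℕ) : ℝ)) :=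
    ((fderiv ℝ f x).le_of_opNorm_le hf (e3 j)).trans
      (by simp only [e3, PiLp.norm_single, norm_one, mul_one]; gcongr; exact le_max_right _ _)
  have hval {y : ℝ} (hy : y ≤ C₀ * (1 + ‖x‖) ^ (-((2 : ℕ) : ℝ))) :
      y ≤ max C₀ C₁ * (1 + ‖x‖) ^ (-((2 : ℕ) : ℝ)) :=
    hy.trans (by gcongr; exact le_max_left _ _)
  calc ‖momentumRate R (u t) (timeDeriv u t) x‖
      ≤ 12 * (max C₀ C₁ * (1 + ‖x‖) ^ (-((2 : ℕ) : ℝ))) ^ 2 :=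
        norm_momentumRate_le hR (hval (hC₀ t ht x).1) (hval (hC₀ t ht x).2)
          (hpd (hC₁ t ht x).1) (hpd (hC₁ t ht x).2)
    _ = 12 * max C₀ C₁ ^ 2 * (1 + ‖x‖) ^ (-4 : ℝ) := by
        rw [mul_pow, ← rpow_mul_natCast (by positivity), ← mul_assoc]
        norm_num

theorem hasDerivAt_momentumDensity (h : IsSchwartzSolution a b lam u) (t : ℝ) (x : E3) :
    HasDerivAt (fun s => momentumDensity R (u s) x) (momentumRate R (u t) (timeDeriv u t) x) t := by
  have hu : ContDiff ℝ 2 (Function.uncurry u) := contDiff_infty.1 h.smooth 2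
  refine (HasDerivAt.fun_sum fun j _ => HasDerivAt.const_mul _ ?_).const_mul 2
  rw [add_comm]
  exact ((hasDerivAt_timeDeriv (hu.differentiable two_ne_zero) t x).const_mul Complex.I).inner ℝ
    (hasDerivAt_fderiv_timeDeriv hu (e3 j) t x)

theorem hasDerivAt_integral_momentumDensity (h : IsSchwartzSolution a b lam u) (hR : 0 < R)
    (t : ℝ) : HasDerivAt (fun s => ∫ x, momentumDensity R (u s) x)
      (∫ x, momentumRate R (u t) (timeDeriv u t) x) t := by
  have hdensity (s : ℝ) : Integrable (momentumDensity R (u s)) := by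
    obtain ⟨f, -, hf, -⟩ := h.exists_schwartzMap_eq s
    exact hf ▸ integrable_momentumDensity hR f
  have hrate : Integrable (momentumRate R (u t) (timeDeriv u t)) := by
    obtain ⟨f, g, hf, hg⟩ := h.exists_schwartzMap_eq t
    exact hf ▸ hg ▸ integrable_momentumRate hR f g
  obtain ⟨C, hC⟩ := h.exists_norm_momentumRate_le hR (by positivity : 0 < |t| + 1)
  have hnhds : Set.Icc (-(|t| + 1)) (|t| + 1) ∈ 𝓝 t :=
    Icc_mem_nhds (by linarith [neg_abs_le t]) (by linarith [le_abs_self t])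
  exact (hasDerivAt_integral_of_dominated_loc_of_deriv_le hnhds
    (.of_forall fun s => (hdensity s).1) (hdensity t) hrate.1 (.of_forall fun x s hs => hC s hs x)
    ((integrable_one_add_norm (by norm_num)).const_mul C)
    (.of_forall fun x s _ => h.hasDerivAt_momentumDensity s x)).2

theorem continuousOn_setIntegral_closedBall (h : IsSchwartzSolution a b lam u) (hb : b < 3)
    (R : ℝ) (hT : 0 < T) : ContinuousOn
      (fun t => ∫ x in Metric.closedBall (0 : E3) R, ‖u t x‖ ^ 4 * ‖x‖ ^ (-b))
      (Set.Icc (-T) T) := by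
  obtain ⟨C, hC⟩ := h.exists_norm_le hT
  have hweight : Measurable fun x : E3 => ‖x‖ ^ (-b) := by fun_prop
  have hlocal : LocallyIntegrable fun x : E3 => ‖x‖ ^ (-b) :=
    locallyIntegrable_of_norm_le_rpow (C := 1) (by simp) (by simpa using hb)
      (.of_forall fun x => by simp [abs_rpow_of_nonneg]) hweight.aestronglyMeasurable
  have hu : Continuous (Function.uncurry u) := h.smooth.continuous
  refine continuousOn_of_dominated (bound := fun x => C ^ 4 * ‖x‖ ^ (-b)) (fun t _ => ?_)
    (fun t ht => .of_forall fun x => ?_)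
    ((hlocal.integrableOn_isCompact (isCompact_closedBall 0 R)).const_mul _)
    (.of_forall fun x => Continuous.continuousOn ?_)
  · have hut : Continuous (u t) := hu.comp (Continuous.prodMk_right t)
    exact ((hut.norm.pow 4).measurable.mul hweight).aestronglyMeasurable
  · rw [norm_of_nonneg (by positivity)]
    gcongr
    exact hC t ht x
  · exact ((hu.comp (Continuous.prodMk_left x)).norm.pow 4).mul_const _

theorem mul_setIntegral_le (h : IsSchwartzSolution a b lam u) (ha : -(1 / 4) ≤ a) (hR : 0 < R)
    (hb₀ : 0 < b) (hb₂ : b < 2) (hlam : 0 < lam) {t M : ℝ}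
    (hM : ∫ x, (‖u t x‖ ^ 2 + ∑ j, ‖pd j (u t) x‖ ^ 2) ≤ M) :
    lam * R⁻¹ * (∫ x in Metric.closedBall (0 : E3) R, ‖u t x‖ ^ 4 * ‖x‖ ^ (-b)) - 7 * R⁻¹ ^ 3 * M
      ≤ ∫ x, momentumRate R (u t) (timeDeriv u t) x := by
  obtain ⟨f, g, hf, hg⟩ := h.exists_schwartzMap_eq t
  have hsolves := h.solvesINLS t
  rw [hf, hg] at hsolves
  rw [hf] at hM
  rw [hf, hg, sub_le_iff_le_add]
  refine (hsolves.mul_setIntegral_le ha hR hb₀ hb₂ hlam).trans ?_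
  gcongr
  exact (integral_norm_sq_le f).trans hM

theorem norm_integral_momentumDensity_le (h : IsSchwartzSolution a b lam u) (hR : 0 < R) (t : ℝ) :
    ‖∫ x, momentumDensity R (u t) x‖ ≤ ∫ x, (‖u t x‖ ^ 2 + ∑ j, ‖pd j (u t) x‖ ^ 2) := by
  obtain ⟨f, -, hf, -⟩ := h.exists_schwartzMap_eq t
  exact hf ▸ norm_integral_momentumDensity_schwartzMap_le hR f

theorem mul_integral_setIntegral_le (h : IsSchwartzSolution a b lam u) (ha : -(1 / 4) ≤ a)
    (hR : 0 < R) (hb₀ : 0 < b) (hb₂ : b < 2) (hlam : 0 < lam) (hT : 0 < T) {M : ℝ}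
    (hM : ∀ t ∈ Set.Icc 0 T, ∫ x, (‖u t x‖ ^ 2 + ∑ j, ‖pd j (u t) x‖ ^ 2) ≤ M) :
    lam * R⁻¹ * ∫ t in Set.Ioc 0 T,
        ∫ x in Metric.closedBall (0 : E3) R, ‖u t x‖ ^ 4 * ‖x‖ ^ (-b)
      ≤ 2 * M + T * (7 * R⁻¹ ^ 3 * M) := by
  set N : ℝ → ℝ := fun t => ∫ x in Metric.closedBall (0 : E3) R, ‖u t x‖ ^ 4 * ‖x‖ ^ (-b)
  set P : ℝ → ℝ := fun t => ∫ x, momentumDensity R (u t) x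
  have hN : IntegrableOn N (Set.Icc 0 T) :=
    (h.continuousOn_setIntegral_closedBall (by linarith) R hT).integrableOn_Icc.mono_set
      (Set.Icc_subset_Icc_left (by linarith))
  have hconst : IntegrableOn (fun _ => 7 * R⁻¹ ^ 3 * M) (Set.Icc 0 T) :=
    integrableOn_const measure_Icc_lt_top.ne
  have hP (t : ℝ) : HasDerivAt P (∫ x, momentumRate R (u t) (timeDeriv u t) x) t :=
    h.hasDerivAt_integral_momentumDensity hR t
  have hP_bound (t : ℝ) (ht : t ∈ Set.Icc 0 T) : |P t| ≤ M :=
    (h.norm_integral_momentumDensity_le hR t).trans (hM t ht)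
  have hgrowth : ∫ t in 0..T, (lam * R⁻¹ * N t - 7 * R⁻¹ ^ 3 * M) ≤ P T - P 0 :=
    intervalIntegral.integral_le_sub_of_hasDeriv_right_of_le hT.le
      (HasDerivAt.continuousOn fun t _ => hP t) (fun t _ => (hP t).hasDerivWithinAt)
      ((hN.const_mul _).sub hconst)
      fun t ht => h.mul_setIntegral_le ha hR hb₀ hb₂ hlam (hM t (Set.Ioo_subset_Icc_self ht))
  have hsplit : ∫ t in 0..T, (lam * R⁻¹ * N t - 7 * R⁻¹ ^ 3 * M)
      = lam * R⁻¹ * (∫ t in Set.Ioc 0 T, N t) - T * (7 * R⁻¹ ^ 3 * M) := by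
    rw [intervalIntegral.integral_of_le hT.le, integral_sub
      ((hN.mono_set Set.Ioc_subset_Icc_self).const_mul _)
      (hconst.mono_set Set.Ioc_subset_Icc_self), integral_const_mul]
    simp [hT.le]
  linarith [le_abs_self (P T), neg_abs_le (P 0), hP_bound T (Set.right_mem_Icc.2 hT.le),
    hP_bound 0 (Set.left_mem_Icc.2 hT.le)]

theorem average_setIntegral_le (h : IsSchwartzSolution a b lam u) (ha : -(1 / 4) ≤ a)
    (hR : 0 < R) (hb₀ : 0 < b) (hb₂ : b < 2) (hlam : 0 < lam) (hT : 0 < T) {M : ℝ}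
    (hM : ∀ t ∈ Set.Icc 0 T, ∫ x, (‖u t x‖ ^ 2 + ∑ j, ‖pd j (u t) x‖ ^ 2) ≤ M) :
    (1 / T) * ∫ t in Set.Ioc 0 T, ∫ x in Metric.closedBall (0 : E3) R, ‖u t x‖ ^ 4 * ‖x‖ ^ (-b)
      ≤ M / lam * (2 * R / T + 7 / R ^ 2) := by
  set I := ∫ t in Set.Ioc 0 T, ∫ x in Metric.closedBall (0 : E3) R, ‖u t x‖ ^ 4 * ‖x‖ ^ (-b)
  calc (1 / T) * I = R / (lam * T) * (lam * R⁻¹ * I) := by field_simp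
    _ ≤ R / (lam * T) * (2 * M + T * (7 * R⁻¹ ^ 3 * M)) := by
        gcongr
        exact h.mul_integral_setIntegral_le ha hR hb₀ hb₂ hlam hT hM
    _ = M / lam * (2 * R / T + 7 / R ^ 2) := by field_simp

end IsSchwartzSolution

theorem morawetz_estimate_general {a b lam E T R : ℝ} {u : ℝ → E3 → ℂ}
    (h : IsSchwartzSolution a b lam u) (ha : -(1 / 4) ≤ a) (hb₀ : 0 < b) (hb₂ : b < 2)
    (hlam : 0 < lam) (hT : 0 < T) (hR : 1 ≤ R)
    (hE : ∀ t ∈ Set.Icc 0 T, ∫ x, (‖u t x‖ ^ 2 + ∑ j, ‖pd j (u t) x‖ ^ 2) ≤ E ^ 2) :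
    (1 / T) * ∫ t in Set.Ioc 0 T,
        ∫ x in Metric.closedBall (0 : E3) (R / 4), ‖u t x‖ ^ 4 * ‖x‖ ^ (-b)
      ≤ 112 * E ^ 2 / lam * (R / T + R ^ (-b)) := by
  have hR₀ : 0 < R := one_pos.trans_le hR
  have hdecay : (R ^ 2)⁻¹ ≤ R ^ (-b) := by
    rw [← rpow_two, ← rpow_neg hR₀.le]
    exact rpow_le_rpow_of_exponent_le hR (by linarith)
  calc _ ≤ E ^ 2 / lam * (2 * (R / 4) / T + 7 / (R / 4) ^ 2) :=
        h.average_setIntegral_le ha (by positivity) hb₀ hb₂ hlam hT hE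
    _ = 112 * E ^ 2 / lam * (R / T / 224 + (R ^ 2)⁻¹) := by field_simp; ring
    _ ≤ 112 * E ^ 2 / lam * (R / T + R ^ (-b)) := mul_le_mul_of_nonneg_left
        (add_le_add (div_le_self (by positivity) (by norm_num)) hdecay) (by positivity)

/-- **Morawetz estimate (defocusing case `λ = 1`).** There are constants
`C > 0` and `R₀ > 1`, depending only on `a`, `b` and `E`, such that for every
uniformly `H¹`-bounded smooth Schwartz solution, every `T > 0` and every
`R ≥ R₀`,
`(1/T) ∫_0^T ∫_{|x| ≤ R/4} |u(t,x)|⁴/|x|^b dx dt ≤ C (R/T + R^{−b})`. -/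
theorem morawetz_estimate (a b : ℝ) (ha : -(1/4 : ℝ) < a)
    (hb0 : 0 < b) (hb1 : b < 1) (E : ℝ) (hE : 0 < E) :
    ∃ C R₀ : ℝ, 0 < C ∧ 1 < R₀ ∧ ∀ u : ℝ → E3 → ℂ, IsSchwartzSolution a b 1 u →
      (∀ t : ℝ, ∫ x : E3,
          (‖u t x‖ ^ 2 + ∑ j : Fin 3, ‖pd j (u t) x‖ ^ 2) ≤ E ^ 2) →
      ∀ T : ℝ, 0 < T → ∀ R : ℝ, R₀ ≤ R →
      (1 / T) * ∫ t in Set.Ioc (0 : ℝ) T,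
          ∫ x in Metric.closedBall (0 : E3) (R / 4), ‖u t x‖ ^ 4 * ‖x‖ ^ (-b)
        ≤ C * (R / T + R ^ (-b)) :=
  ⟨112 * E ^ 2, 2, by positivity, one_lt_two, fun _ h hu _ hT _ hR => by
    simpa using morawetz_estimate_general h ha.le hb0 (by linarith) one_pos hT
      (one_le_two.trans hR) fun t _ => hu t⟩
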